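/- arXiv:2602.04671 — 7 statements merged into one kernel-verified Lean document; each statement's English description precedes it below -/
import Mathlib

section
/- Let w be a real number. There is no smooth function y defined on an open neighbourhood U of 0 in ℝ such that y'(0) ≠ 0 and x²·y'(x) = w·y(x) for all x ∈ U. (Consequently, the vector field x²∂ₓ on ℝ admits no homogeneous coordinate around 0, i.e., it is not a weight vector field.) -/
/-- There is no smooth function `y` defined on an open neighbourhood `U` of
`0` in `ℝ` such that `y'(0) ≠ 0` and `x² ⬝ y'(x) = w ⬝ y(x)` for all `x ∈ U`. -/
theorem stmt_0 (w : ℝ) :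
    ¬ ∃ (U : Set ℝ) (y : ℝ → ℝ), IsOpen U ∧ (0 : ℝ) ∈ U ∧
      ContDiffOn ℝ (⊤ : ℕ∞) y U ∧ deriv y 0 ≠ 0 ∧
      ∀ x ∈ U, x ^ 2 * deriv y x = w * y x := by
  rintro ⟨U, y, hU, h0, hy, hne, h⟩
  have hUn : U ∈ nhds (0 : ℝ) := hU.mem_nhds h0
  have hd : DifferentiableAt ℝ y 0 := by
    by_contra hc
    exact hne (deriv_zero_of_not_differentiableAt hc)
  have hg : ContDiffOn ℝ 1 (deriv y) U :=
    (hy.of_le (m := ((2 : ℕ∞) : WithTop ℕ∞)) (WithTop.coe_le_coe.mpr le_top)).deriv_of_isOpen hU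
      (by norm_num [one_add_one_eq_two])
  have hgd : DifferentiableAt ℝ (deriv y) 0 :=
    (hg.differentiableOn (by norm_num)).differentiableAt hUn
  have h1 : HasDerivAt (fun x : ℝ => x ^ 2 * deriv y x) 0 0 := by
    have := (hasDerivAt_pow 2 (0 : ℝ)).mul hgd.hasDerivAt
    exact this.congr_deriv (by simp)
  have h2 : HasDerivAt (fun x : ℝ => w * y x) (w * deriv y 0) 0 :=
    hd.hasDerivAt.const_mul w
  have h3 : (fun x : ℝ => w * y x) =ᶠ[nhds 0] (fun x : ℝ => x ^ 2 * deriv y x) := by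
    filter_upwards [hUn] with x hx
    exact (h x hx).symm
  have h4 : w * deriv y 0 = 0 := h2.unique (h1.congr_of_eventuallyEq h3)
  have hw : w = 0 := (mul_eq_zero.mp h4).resolve_right hne
  have h5 : ∀ᶠ x in nhds (0 : ℝ), deriv y x ≠ 0 := hgd.continuousAt.eventually_ne hne
  have h6 : ∀ᶠ x in nhdsWithin (0 : ℝ) {0}ᶜ, False := by
    filter_upwards [nhdsWithin_le_nhds h5, nhdsWithin_le_nhds hUn, self_mem_nhdsWithin]
      with x hx hxU hx0
    have := h x hxU
    rw [hw, zero_mul] at this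
    exact mul_ne_zero (pow_ne_zero 2 hx0) hx this
  exact h6.exists.elim fun _ hf => hf
end

section
/- Non-vanishing vector fields admit homogeneous coordinates with prescribed weights: let X be a smooth vector field on an open set U ⊆ ℝⁿ and let m ∈ U with X(m) ≠ 0. Then for any real numbers w ≠ 0 and v₂,…,vₙ, there exist an open neighbourhood V ⊆ U of m and smooth functions x, z², …, zⁿ : V → ℝ whose differentials are linearly independent at every point of V, such that x(m) = 1, zⁱ(m) = 0 for i = 2,…,n, and Dx(y)(X(y)) = w·x(y), Dzⁱ(y)(X(y)) = vᵢ·zⁱ(y) for all y ∈ V. In these coordinates X = w·x ∂ₓ + Σᵢ vᵢ zⁱ ∂_{zⁱ}. -/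
open Topology Set Filter

noncomputable def nemL (K E F : Type) [TopologicalSpace K] [CompactSpace K]
    [NormedAddCommGroup E] [NormedSpace ℝ E] [NormedAddCommGroup F] [NormedSpace ℝ F] :
    C(K, E →L[ℝ] F) →L[ℝ] C(K, E) →L[ℝ] C(K, F) :=
  LinearMap.mkContinuous₂
    (LinearMap.mk₂ ℝ (fun (A : C(K, E →L[ℝ] F)) (h : C(K, E)) => (⟨fun t => A t (h t), by fun_prop⟩ : C(K, F)))
      (by intros; ext; simp) (by intros; ext; simp) (by intros; ext; simp) (by intros; ext; simp))
    1 (by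
      intro A h
      rw [ContinuousMap.norm_le _ (by positivity)]
      intro t
      simp only [LinearMap.mk₂_apply, ContinuousMap.coe_mk, one_mul]
      exact (A t).le_of_opNorm_le_of_le (A.norm_coe_le_norm t) (h.norm_coe_le_norm t))

theorem nemL_apply {K E F : Type} [TopologicalSpace K] [CompactSpace K]
    [NormedAddCommGroup E] [NormedSpace ℝ E] [NormedAddCommGroup F] [NormedSpace ℝ F]
    (A : C(K, E →L[ℝ] F)) (h : C(K, E)) (t : K) : nemL K E F A h t = A t (h t) := rfl

theorem nem_hasFDerivAt {K E F : Type} [TopologicalSpace K] [CompactSpace K]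
    [NormedAddCommGroup E] [NormedSpace ℝ E] [NormedAddCommGroup F] [NormedSpace ℝ F]
    (f : C(E, F)) (f' : C(E, E →L[ℝ] F)) (hf : ∀ x, HasFDerivAt f (f' x) x) (α : C(K, E)) :
    HasFDerivAt (fun α : C(K, E) => f.comp α) (nemL K E F (f'.comp α)) α := by
  rw [hasFDerivAt_iff_isLittleO_nhds_zero, Asymptotics.isLittleO_iff]
  intro ε hε
  have hK : IsCompact (range α) := isCompact_range α.continuous
  have := hK.uniformContinuousAt_of_continuousAt f' (fun a _ => f'.continuous.continuousAt)
    (Metric.dist_mem_uniformity hε)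
  obtain ⟨δ, hδ, H⟩ := Metric.mem_uniformity_dist.1 this
  filter_upwards [Metric.ball_mem_nhds 0 hδ] with h hh
  rw [mem_ball_zero_iff] at hh
  rw [ContinuousMap.norm_le _ (by positivity)]
  intro t
  have h1 : ‖h t‖ < δ := (h.norm_coe_le_norm t).trans_lt hh
  have := (convex_ball (α t) δ).norm_image_sub_le_of_norm_hasFDerivWithin_le' (f := f)
    (f' := f') (φ := f' (α t)) (C := ε) (x := α t) (y := α t + h t)
    (fun x _ => (hf x).hasFDerivWithinAt)
    (by
      intro x hx
      have := @H (α t) x (by rwa [dist_comm]) (mem_range_self t)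
      rw [← dist_eq_norm, dist_comm]; exact le_of_lt this)
    (Metric.mem_ball_self hδ) (by simpa using h1)
  simp only [add_sub_cancel_left] at this
  refine le_trans ?_ (this.trans (by gcongr; exact h.norm_coe_le_norm t))
  simp [nemL_apply]

theorem nem_contDiff_nat (k : ℕ) : ∀ {K E F : Type} [TopologicalSpace K] [CompactSpace K]
    [NormedAddCommGroup E] [NormedSpace ℝ E] [NormedAddCommGroup F] [NormedSpace ℝ F]
    (f : C(E, F)) (_ : ContDiff ℝ k f), ContDiff ℝ k (fun α : C(K, E) => f.comp α) := by
  induction k with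
  | zero =>
    intro K E F _ _ _ _ _ _ f hf
    exact contDiff_zero.2 (ContinuousMap.continuous_postcomp f)
  | succ k ih =>
    intro K E F _ _ _ _ _ _ f hf
    rw [Nat.cast_add, Nat.cast_one] at hf ⊢
    obtain ⟨f', hf', hd⟩ := contDiff_succ_iff_hasFDerivAt.1 hf
    refine contDiff_succ_iff_hasFDerivAt.2
      ⟨fun α => nemL K E F ((⟨f', hf'.continuous⟩ : C(E, E →L[ℝ] F)).comp α), ?_, fun α => ?_⟩
    · exact (nemL K E F).contDiff.comp (ih (⟨f', hf'.continuous⟩ : C(E, E →L[ℝ] F)) hf')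
    · exact nem_hasFDerivAt f ⟨f', hf'.continuous⟩ hd α

theorem nem_contDiff {K E F : Type} [TopologicalSpace K] [CompactSpace K]
    [NormedAddCommGroup E] [NormedSpace ℝ E] [NormedAddCommGroup F] [NormedSpace ℝ F]
    (f : C(E, F)) (hf : ContDiff ℝ (⊤ : ℕ∞) f) :
    ContDiff ℝ (⊤ : ℕ∞) (fun α : C(K, E) => f.comp α) :=
  contDiff_infty.2 fun k => nem_contDiff_nat k f (contDiff_infty.1 hf k)

/-- Smooth inverse function theorem on a neighbourhood. -/
theorem smooth_ift {E F : Type} [NormedAddCommGroup E] [NormedSpace ℝ E] [CompleteSpace E]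
    [NormedAddCommGroup F] [NormedSpace ℝ F] (f : E → F) (W : Set E) (hW : IsOpen W)
    (hf : ContDiffOn ℝ (⊤ : ℕ∞) f W) (a : E) (ha : a ∈ W) (T : E ≃L[ℝ] F)
    (hT : HasFDerivAt f (T : E →L[ℝ] F) a) :
    ∃ e : OpenPartialHomeomorph E F, (e : E → F) = f ∧ a ∈ e.source ∧ e.source ⊆ W ∧
      ContDiffOn ℝ (⊤ : ℕ∞) e.symm e.target := by
  have hfa := hf.contDiffAt (hW.mem_nhds ha)
  have hc : ContinuousOn (fderiv ℝ f) W := hf.continuousOn_fderiv_of_isOpen hW (by simp)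
  set W' := W ∩ (fderiv ℝ f) ⁻¹' (range ((↑) : (E ≃L[ℝ] F) → E →L[ℝ] F)) with hW'
  have hW'o : IsOpen W' := hc.isOpen_inter_preimage hW ContinuousLinearEquiv.isOpen
  have ha' : a ∈ W' := ⟨ha, by rw [mem_preimage, hT.fderiv]; exact mem_range_self T⟩
  set e := (hfa.toOpenPartialHomeomorph f hT (by simp)).restrOpen W' hW'o with he
  have hef : (e : E → F) = f := rfl
  have hs : e.source ⊆ W' := by
    rw [he, OpenPartialHomeomorph.restrOpen_source]; exact inter_subset_right
  refine ⟨e, hef, ?_, hs.trans inter_subset_left, ?_⟩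
  · rw [he, OpenPartialHomeomorph.restrOpen_source]
    exact ⟨hfa.mem_toOpenPartialHomeomorph_source hT (by simp), ha'⟩
  · intro y hy
    obtain ⟨h1, S, hS⟩ := hs (e.map_target hy)
    have hfx := hf.contDiffAt (hW.mem_nhds h1)
    refine (e.contDiffAt_symm hy (f₀' := S) ?_ ?_).contDiffWithinAt
    · rw [hS, hef]; exact (hfx.differentiableAt (by simp)).hasFDerivAt
    · rw [hef]; exact hfx

theorem cutoff {E : Type} [NormedAddCommGroup E] [NormedSpace ℝ E] [FiniteDimensional ℝ E]
    (U : Set E) (hU : IsOpen U) (X : E → E) (hX : ContDiffOn ℝ (⊤ : ℕ∞) X U) (m : E) (hm : m ∈ U) :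
    ∃ (Y : E → E) (r : ℝ), 0 < r ∧ ContDiff ℝ (⊤ : ℕ∞) Y ∧ Metric.ball m r ⊆ U ∧
      ∀ y ∈ Metric.ball m r, Y y = X y := by
  obtain ⟨R, hR, hRU⟩ := Metric.nhds_basis_closedBall.mem_iff.1 (hU.mem_nhds hm)
  let b : ContDiffBump m := ⟨R / 2, R, by positivity, by linarith⟩
  refine ⟨fun y => b y • X y, R / 2, by positivity, ?_,
    (Metric.ball_subset_closedBall.trans (Metric.closedBall_subset_closedBall (by linarith))).trans
      hRU, ?_⟩
  · rw [contDiff_iff_contDiffAt]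
    intro y
    by_cases hy : y ∈ U
    · exact b.contDiffAt.smul (hX.contDiffAt (hU.mem_nhds hy))
    · have : y ∉ tsupport b := by rw [b.tsupport_eq]; exact fun h => hy (hRU h)
      have h0 : b =ᶠ[𝓝 y] 0 := notMem_tsupport_iff_eventuallyEq.1 this
      refine (contDiffAt_const (c := (0 : E))).congr_of_eventuallyEq ?_
      filter_upwards [h0] with z hz
      simp [hz]
  · intro y hy
    have : b y = 1 := b.one_of_mem_closedBall (Metric.ball_subset_closedBall hy)
    simp [this]

abbrev II : Type := Icc (-1 : ℝ) 1

noncomputable def prI (t : ℝ) : II := projIcc (-1) 1 (by norm_num) t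

theorem prI_cont : Continuous prI :=
  continuous_projIcc (h := by norm_num)

theorem prI_of_mem (t : II) : prI t = t := projIcc_val _ t

noncomputable def volJ (E : Type) [NormedAddCommGroup E] [NormedSpace ℝ E] [CompleteSpace E] :
    C(II, E) →L[ℝ] C(II, E) :=
  LinearMap.mkContinuous
    { toFun := fun β => ⟨fun t => ∫ τ in (0 : ℝ)..t, β (prI τ), by
        have h : Continuous fun τ => β (prI τ) := β.continuous.comp prI_cont
        exact (intervalIntegral.continuous_primitive
          (fun a b => h.intervalIntegrable a b) 0).comp continuous_subtype_val⟩
      map_add' := by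
        intro β γ
        ext t
        have h : Continuous fun τ => β (prI τ) := β.continuous.comp prI_cont
        have h' : Continuous fun τ => γ (prI τ) := γ.continuous.comp prI_cont
        exact intervalIntegral.integral_add (h.intervalIntegrable _ _) (h'.intervalIntegrable _ _)
      map_smul' := by
        intro c β
        ext t
        exact intervalIntegral.integral_smul c _ } 1 (by
      intro β
      rw [ContinuousMap.norm_le _ (by positivity)]
      intro t
      refine (intervalIntegral.norm_integral_le_of_norm_le_const (C := ‖β‖)
        (fun τ _ => β.norm_coe_le_norm _)).trans ?_
      have : |(t : ℝ) - 0| ≤ 1 := by rw [sub_zero, abs_le]; exact t.2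
      nlinarith [norm_nonneg β])

theorem volJ_apply {E : Type} [NormedAddCommGroup E] [NormedSpace ℝ E] [CompleteSpace E]
    (β : C(II, E)) (t : II) : volJ E β t = ∫ τ in (0 : ℝ)..t, β (prI τ) := rfl

noncomputable def cstI (E : Type) [NormedAddCommGroup E] [NormedSpace ℝ E] : E →L[ℝ] C(II, E) :=
  LinearMap.mkContinuous
    { toFun := fun y => ContinuousMap.const II y
      map_add' := by intros; ext; simp
      map_smul' := by intros; ext; simp } 1 (by
      intro y
      rw [ContinuousMap.norm_le _ (by positivity)]
      intro t
      simp)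

theorem cstI_apply {E : Type} [NormedAddCommGroup E] [NormedSpace ℝ E]
    (y : E) (t : II) : cstI E y t = y := rfl

/-- The map whose zeros are the rescaled integral curves. -/
noncomputable def GG {E : Type} [NormedAddCommGroup E] [NormedSpace ℝ E] [CompleteSpace E]
    (Y : C(E, E)) (q : (ℝ × E) × C(II, E)) : (ℝ × E) × C(II, E) :=
  (q.1, q.2 - cstI E q.1.2 - q.1.1 • volJ E (Y.comp q.2))

theorem GG_contDiff {E : Type} [NormedAddCommGroup E] [NormedSpace ℝ E] [CompleteSpace E]
    (Y : C(E, E)) (hY : ContDiff ℝ (⊤ : ℕ∞) Y) : ContDiff ℝ (⊤ : ℕ∞) (GG Y) := by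
  have h1 : ContDiff ℝ (⊤ : ℕ∞) (fun q : (ℝ × E) × C(II, E) => volJ E (Y.comp q.2)) :=
    (volJ E).contDiff.comp ((nem_contDiff Y hY).comp contDiff_snd)
  have h2 : ContDiff ℝ (⊤ : ℕ∞) (fun q : (ℝ × E) × C(II, E) => cstI E q.1.2) :=
    (cstI E).contDiff.comp (contDiff_snd.comp contDiff_fst)
  have h3 : ContDiff ℝ (⊤ : ℕ∞) (fun q : (ℝ × E) × C(II, E) => q.1.1) :=
    contDiff_fst.comp contDiff_fst
  exact contDiff_fst.prodMk ((contDiff_snd.sub h2).sub (h3.smul h1))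

theorem GG_deriv {E : Type} [NormedAddCommGroup E] [NormedSpace ℝ E] [CompleteSpace E]
    (Y : C(E, E)) (hY : ContDiff ℝ (⊤ : ℕ∞) Y) (m : E) :
    ∃ T : ((ℝ × E) × C(II, E)) ≃L[ℝ] ((ℝ × E) × C(II, E)),
      HasFDerivAt (GG Y) (T : _ →L[ℝ] _) ((0, m), cstI E m) := by
  let B : ℝ × E →L[ℝ] C(II, E) :=
    (cstI E).comp (ContinuousLinearMap.snd ℝ ℝ E) +
      (ContinuousLinearMap.fst ℝ ℝ E).smulRight (volJ E (Y.comp (cstI E m)))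
  refine ⟨ContinuousLinearEquiv.skewProd (ContinuousLinearEquiv.refl ℝ _)
    (ContinuousLinearEquiv.refl ℝ _) (-B), ?_⟩
  have h1 : ContDiff ℝ (⊤ : ℕ∞) (fun q : (ℝ × E) × C(II, E) => volJ E (Y.comp q.2)) :=
    (volJ E).contDiff.comp ((nem_contDiff Y hY).comp contDiff_snd)
  have d1 := (h1.differentiable (by simp) ((0, m), cstI E m)).hasFDerivAt
  have d2 : HasFDerivAt (fun q : (ℝ × E) × C(II, E) => cstI E q.1.2) _ ((0, m), cstI E m) :=
    ((cstI E).comp ((ContinuousLinearMap.snd ℝ ℝ E).comp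
      (ContinuousLinearMap.fst ℝ (ℝ × E) C(II, E)))).hasFDerivAt
  have d3 : HasFDerivAt (fun q : (ℝ × E) × C(II, E) => q.1.1) _ ((0, m), cstI E m) :=
    ((ContinuousLinearMap.fst ℝ ℝ E).comp
      (ContinuousLinearMap.fst ℝ (ℝ × E) C(II, E))).hasFDerivAt
  have d := (hasFDerivAt_fst (𝕜 := ℝ) (p := (((0 : ℝ), m), cstI E m))).prodMk
    (((hasFDerivAt_snd (𝕜 := ℝ) (p := (((0 : ℝ), m), cstI E m))).sub d2).sub (d3.smul d1))
  refine HasFDerivAt.congr_fderiv d ?_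
  refine ContinuousLinearMap.ext fun q => ?_
  refine Prod.ext ?_ ?_
  · simp
  · simp [B]
    abel

theorem flow_exists {E : Type} [NormedAddCommGroup E] [NormedSpace ℝ E] [CompleteSpace E]
    (Y : E → E) (hY : ContDiff ℝ (⊤ : ℕ∞) Y) (m : E) :
    ∃ (φ : ℝ × E → E) (δ : ℝ), 0 < δ ∧ ContDiffOn ℝ (⊤ : ℕ∞) φ (Metric.ball (0, m) δ) ∧
      (∀ y, (0, y) ∈ Metric.ball ((0 : ℝ), m) δ → φ (0, y) = y) ∧
      ∀ s y, (s, y) ∈ Metric.ball ((0 : ℝ), m) δ →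
        HasDerivAt (fun s => φ (s, y)) (Y (φ (s, y))) s := by
  let Yc : C(E, E) := ⟨Y, hY.continuous⟩
  obtain ⟨T, hT⟩ := GG_deriv Yc hY m
  set a : (ℝ × E) × C(II, E) := ((0, m), cstI E m) with ha
  obtain ⟨e, he, hae, -, hes⟩ := smooth_ift (GG Yc) univ isOpen_univ
    (GG_contDiff Yc hY).contDiffOn a (mem_univ _) T hT
  have hGa : e a = ((0, m), 0) := by
    rw [he, ha]; simp [GG]
  obtain ⟨ρ, hρ, hρs⟩ := Metric.isOpen_iff.1 e.open_source a hae
  have hta : (((0 : ℝ), m), (0 : C(II, E))) ∈ e.target := hGa ▸ e.map_source hae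
  have hsa : e.symm ((0, m), 0) = a := by rw [← hGa, e.left_inv hae]
  have hev : ∀ᶠ p : ℝ × E in 𝓝 (0, m), (p, (0 : C(II, E))) ∈ e.target ∧
      e.symm (p, 0) ∈ Metric.ball a ρ := by
    have hc : Tendsto (fun p : ℝ × E => (p, (0 : C(II, E)))) (𝓝 (0, m)) (𝓝 ((0, m), 0)) :=
      Continuous.tendsto (by fun_prop) _
    have h2 : Tendsto e.symm (𝓝 ((0, m), 0)) (𝓝 a) := by
      have := e.continuousAt_symm hta
      rwa [ContinuousAt, hsa] at this
    exact (hc.eventually (e.open_target.mem_nhds hta)).and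
      (hc.eventually (h2.eventually (Metric.ball_mem_nhds a hρ)))
  obtain ⟨δ', hδ', hδs⟩ := Metric.eventually_nhds_iff_ball.1 hev
  set δ := min δ' ρ with hδ
  have hδ0 : 0 < δ := lt_min hδ' hρ
  have hδs' : ∀ p ∈ Metric.ball ((0 : ℝ), m) δ, (p, (0 : C(II, E))) ∈ e.target ∧
      e.symm (p, 0) ∈ Metric.ball a ρ :=
    fun p hp => hδs p (Metric.ball_subset_ball (min_le_left _ _) hp)
  let A : ℝ × E → C(II, E) := fun p => (e.symm (p, 0)).2
  have hA1 : ∀ p ∈ Metric.ball ((0 : ℝ), m) δ, e.symm (p, 0) = (p, A p) := by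
    intro p hp
    have h := e.right_inv (hδs' p hp).1
    rw [he] at h
    have h1 : (e.symm (p, 0)).1 = p := congrArg Prod.fst h
    exact Prod.ext h1 rfl
  have hA2 : ∀ p ∈ Metric.ball ((0 : ℝ), m) δ, ∀ t : II,
      A p t = p.2 + p.1 • ∫ τ in (0 : ℝ)..t, Y (A p (prI τ)) := by
    intro p hp t
    have h := e.right_inv (hδs' p hp).1
    rw [hA1 p hp, he] at h
    have h1 : A p - cstI E p.2 - p.1 • volJ E (Yc.comp (A p)) = 0 := congrArg Prod.snd h
    have h2 := congrArg (fun f : C(II, E) => f t) h1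
    have h3 : A p t - p.2 - p.1 • ∫ τ in (0 : ℝ)..t, Y (A p (prI τ)) = 0 := h2
    rw [sub_sub, sub_eq_zero] at h3
    exact h3
  have hA3 : ∀ p ∈ Metric.ball ((0 : ℝ), m) δ, ∀ t : II, dist (A p t) m < ρ := by
    intro p hp t
    have h := (hδs' p hp).2
    rw [hA1 p hp, ha, Metric.mem_ball, Prod.dist_eq, max_lt_iff] at h
    exact (ContinuousMap.dist_apply_le_dist (f := A p) (g := cstI E m) t).trans_lt h.2
  have hA4 : ∀ s0 y, (s0, y) ∈ Metric.ball ((0 : ℝ), m) δ → ∀ r : II,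
      A ((r : ℝ) * s0, y) (prI 1) = A (s0, y) r := by
    intro s0 y hp r
    have hr : |(r : ℝ)| ≤ 1 := abs_le.2 r.2
    have hmem : ∀ t : II, (r : ℝ) * t ∈ Icc (-1 : ℝ) 1 := by
      intro t
      have ht : |(t : ℝ)| ≤ 1 := abs_le.2 t.2
      rw [mem_Icc, ← abs_le, abs_mul]
      exact mul_le_one₀ hr (abs_nonneg _) ht
    have hp' : ((r : ℝ) * s0, y) ∈ Metric.ball ((0 : ℝ), m) δ := by
      rw [Metric.mem_ball, Prod.dist_eq, max_lt_iff] at hp ⊢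
      refine ⟨?_, hp.2⟩
      have h := hp.1
      simp only [dist_zero_right, Real.norm_eq_abs, abs_mul] at h ⊢
      nlinarith [abs_nonneg s0]
    let β : C(II, E) := ⟨fun t => A (s0, y) ⟨r * t, hmem t⟩, by fun_prop⟩
    have hβs : (((r : ℝ) * s0, y), β) ∈ e.source := by
      apply hρs
      rw [ha, Metric.mem_ball, Prod.dist_eq, max_lt_iff]
      refine ⟨lt_of_lt_of_le hp' (min_le_right _ _), ?_⟩
      rw [ContinuousMap.dist_lt_iff hρ]
      exact fun t => hA3 _ hp _
    have hG : e (((r : ℝ) * s0, y), β) = (((r : ℝ) * s0, y), 0) := by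
      rw [he]
      refine Prod.ext rfl ?_
      ext t
      change A (s0, y) ⟨r * t, hmem t⟩ - y - ((r : ℝ) * s0) • (∫ τ in (0 : ℝ)..t,
        Y (A (s0, y) ⟨r * (prI τ), hmem (prI τ)⟩)) = 0
      have h1 := hA2 _ hp ⟨r * t, hmem t⟩
      have h2 : ∫ τ in (0 : ℝ)..t, Y (A (s0, y) ⟨r * (prI τ), hmem (prI τ)⟩) =
          ∫ τ in (0 : ℝ)..t, Y (A (s0, y) (prI (r * τ))) := by
        apply intervalIntegral.integral_congr
        intro τ hτ
        have hτ' : τ ∈ Icc (-1 : ℝ) 1 :=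
          (convex_Icc (-1 : ℝ) 1).ordConnected.uIcc_subset (by simp) t.2 hτ
        have e1 : prI τ = ⟨τ, hτ'⟩ := prI_of_mem ⟨τ, hτ'⟩
        have e2 : prI (r * τ) = ⟨r * τ, hmem ⟨τ, hτ'⟩⟩ := prI_of_mem ⟨r * τ, hmem ⟨τ, hτ'⟩⟩
        simp only [e1, e2]
      have h3 := intervalIntegral.smul_integral_comp_mul_left (a := 0) (b := (t : ℝ))
        (fun τ => Y (A (s0, y) (prI τ))) (r : ℝ)
      rw [h2, h1, mul_comm (r : ℝ) s0, mul_smul, h3]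
      simp
    have h5 : e.symm (((r : ℝ) * s0, y), 0) = (((r : ℝ) * s0, y), β) := by
      rw [← hG, e.left_inv hβs]
    have h6 : A ((r : ℝ) * s0, y) = β := congrArg Prod.snd h5
    rw [h6]
    change A (s0, y) _ = _
    congr 1
    apply Subtype.ext
    have : prI 1 = ⟨1, by simp⟩ := prI_of_mem ⟨1, by simp⟩
    simp [this]
  refine ⟨fun p => A p (prI 1), δ, hδ0, ?_, ?_, ?_⟩
  · have h1 : ContDiffOn ℝ (⊤ : ℕ∞) (fun p : ℝ × E => e.symm (p, 0)) (Metric.ball (0, m) δ) :=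
      hes.comp (contDiff_id.prodMk contDiff_const).contDiffOn (fun p hp => (hδs' p hp).1)
    exact (ContinuousMap.evalCLM ℝ (prI 1)).contDiff.comp_contDiffOn
      (contDiff_snd.comp_contDiffOn h1)
  · intro y hy
    simpa using hA2 _ hy (prI 1)
  · intro s y hsy
    obtain ⟨s0, hs0, hsδ⟩ : ∃ s0, |s| < s0 ∧ s0 < δ := by
      apply exists_between
      rw [Metric.mem_ball, Prod.dist_eq, max_lt_iff] at hsy
      simpa using hsy.1
    have hs0p : 0 < s0 := (abs_nonneg s).trans_lt hs0
    have hp : (s0, y) ∈ Metric.ball ((0 : ℝ), m) δ := by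
      rw [Metric.mem_ball, Prod.dist_eq, max_lt_iff] at hsy ⊢
      refine ⟨by simpa [abs_of_pos hs0p] using hsδ, hsy.2⟩
    have key : ∀ s', |s'| < s0 → A (s', y) (prI 1) = A (s0, y) (prI (s' / s0)) := by
      intro s' hs'
      have hm : s' / s0 ∈ Icc (-1 : ℝ) 1 := by
        rw [mem_Icc, ← abs_le, abs_div, abs_of_pos hs0p, div_le_one hs0p]; exact hs'.le
      have e1 : prI (s' / s0) = ⟨s' / s0, hm⟩ := prI_of_mem ⟨s' / s0, hm⟩
      have := hA4 s0 y hp ⟨s' / s0, hm⟩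
      rw [e1, ← this]
      congr 3
      field_simp
    have key2 : ∀ s', |s'| < s0 → A (s', y) (prI 1) =
        y + s0 • ∫ τ in (0 : ℝ)..(s' / s0), Y (A (s0, y) (prI τ)) := by
      intro s' hs'
      have hm : s' / s0 ∈ Icc (-1 : ℝ) 1 := by
        rw [mem_Icc, ← abs_le, abs_div, abs_of_pos hs0p, div_le_one hs0p]; exact hs'.le
      have e1 : prI (s' / s0) = ⟨s' / s0, hm⟩ := prI_of_mem ⟨s' / s0, hm⟩
      rw [key s' hs', hA2 _ hp, e1]
    have hcont : Continuous fun τ => Y (A (s0, y) (prI τ)) :=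
      hY.continuous.comp ((A (s0, y)).continuous.comp prI_cont)
    have hd : HasDerivAt (fun u => ∫ τ in (0 : ℝ)..u, Y (A (s0, y) (prI τ)))
        (Y (A (s0, y) (prI (s / s0)))) (s / s0) :=
      intervalIntegral.integral_hasDerivAt_right (hcont.intervalIntegrable _ _)
        (hcont.stronglyMeasurableAtFilter _ _) hcont.continuousAt
    have hd2 := (HasDerivAt.scomp s hd ((hasDerivAt_id s).div_const s0)).const_smul s0
    have hd3 := hd2.const_add y
    have hval : s0 • ((1 : ℝ) / s0) • Y (A (s0, y) (prI (s / s0))) = Y (A (s, y) (prI 1)) := by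
      rw [smul_smul, mul_one_div_cancel hs0p.ne', one_smul, key s hs0]
    rw [hval] at hd3
    refine hd3.congr_of_eventuallyEq ?_
    have : ∀ᶠ s' in 𝓝 s, |s'| < s0 := continuous_abs.continuousAt.eventually_lt_const hs0
    filter_upwards [this] with s' hs'
    exact key2 s' hs'

theorem straighten (n : ℕ) (U : Set (Fin (n + 1) → ℝ)) (hU : IsOpen U)
    (X : (Fin (n + 1) → ℝ) → (Fin (n + 1) → ℝ)) (hX : ContDiffOn ℝ (⊤ : ℕ∞) X U)
    (m : Fin (n + 1) → ℝ) (hm : m ∈ U) (hXm : X m ≠ 0) :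
    ∃ (V : Set (Fin (n + 1) → ℝ)) (θ : (Fin (n + 1) → ℝ) → (Fin (n + 1) → ℝ)),
      IsOpen V ∧ m ∈ V ∧ V ⊆ U ∧ ContDiffOn ℝ (⊤ : ℕ∞) θ V ∧ θ m = 0 ∧
      ∀ y ∈ V, fderiv ℝ θ y (X y) = Pi.single 0 1 ∧
        ∀ q, ∃ u, fderiv ℝ θ y u = q := by
  obtain ⟨Y, r, hr, hY, hrU, hYX⟩ := cutoff U hU X hX m hm
  obtain ⟨φ, δ, hδ, hφ, hφ0, hφd⟩ := flow_exists Y hY m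
  set e0 : Fin (n + 1) → ℝ := Pi.single 0 1 with he0
  have he0' : e0 ≠ 0 := by simp [he0]
  obtain ⟨T, hT⟩ := SeparatingDual.exists_continuousLinearEquiv_apply_eq (R := ℝ) he0' hXm
  let P : (Fin (n + 1) → ℝ) →L[ℝ] ℝ := ContinuousLinearMap.proj 0
  have hP : P e0 = 1 := by simp [P, he0]
  let L : (Fin (n + 1) → ℝ) →L[ℝ] ℝ × (Fin (n + 1) → ℝ) :=
    P.prod ((T : (Fin (n + 1) → ℝ) →L[ℝ] _).comp (ContinuousLinearMap.id ℝ _ - P.smulRight e0))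
  have hL : ∀ p, L p = (P p, T (p - P p • e0)) := fun p => rfl
  let i : (Fin (n + 1) → ℝ) → ℝ × (Fin (n + 1) → ℝ) := fun p => (0, m) + L p
  have hi : ContDiff ℝ (⊤ : ℕ∞) i := contDiff_const.add L.contDiff
  have hid : ∀ p, HasFDerivAt i L p := fun p => L.hasFDerivAt.const_add _
  have hi0 : i 0 = (0, m) := by simp [i]
  have hB : IsOpen (Metric.ball ((0 : ℝ), m) δ) := Metric.isOpen_ball
  have h0B : ((0 : ℝ), m) ∈ Metric.ball ((0 : ℝ), m) δ := Metric.mem_ball_self hδ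
  have hφD : ∀ p ∈ Metric.ball ((0 : ℝ), m) δ, HasFDerivAt φ (fderiv ℝ φ p) p := fun p hp =>
    ((hφ.contDiffAt (hB.mem_nhds hp)).differentiableAt (by simp)).hasFDerivAt
  have hφ1 : ∀ p ∈ Metric.ball ((0 : ℝ), m) δ, fderiv ℝ φ p (1, 0) = Y (φ p) := by
    rintro ⟨s, y⟩ hp
    have h1 : HasDerivAt (fun s : ℝ => (s, y)) ((1 : ℝ), (0 : Fin (n + 1) → ℝ)) s :=
      (hasDerivAt_id s).prodMk (hasDerivAt_const s y)
    exact ((hφD _ hp).comp_hasDerivAt s h1).unique (hφd s y hp)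
  have hφ2 : ∀ u, fderiv ℝ φ (0, m) (0, u) = u := by
    intro u
    have h1 : HasFDerivAt (fun y : Fin (n + 1) → ℝ => ((0 : ℝ), y))
      (ContinuousLinearMap.inr ℝ ℝ (Fin (n + 1) → ℝ)) m :=
      (ContinuousLinearMap.inr ℝ ℝ (Fin (n + 1) → ℝ)).hasFDerivAt
    have h2 := (hφD _ h0B).comp m h1
    have h3 : HasFDerivAt (φ ∘ fun y : Fin (n + 1) → ℝ => ((0 : ℝ), y))
        (ContinuousLinearMap.id ℝ (Fin (n + 1) → ℝ)) m := by
      refine (hasFDerivAt_id m).congr_of_eventuallyEq ?_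
      have hc : Continuous fun y : Fin (n + 1) → ℝ => ((0 : ℝ), y) := by fun_prop
      filter_upwards [hc.continuousAt.preimage_mem_nhds (hB.mem_nhds h0B)] with y hy
      exact hφ0 y hy
    have h4 := h2.unique h3
    simpa using congrArg (fun f : (Fin (n + 1) → ℝ) →L[ℝ] (Fin (n + 1) → ℝ) => f u) h4
  let Ψ : (Fin (n + 1) → ℝ) → (Fin (n + 1) → ℝ) := fun p => φ (i p)
  have hW0 : IsOpen (i ⁻¹' Metric.ball ((0 : ℝ), m) δ) := hB.preimage hi.continuous
  have hΨs : ContDiffOn ℝ (⊤ : ℕ∞) Ψ (i ⁻¹' Metric.ball ((0 : ℝ), m) δ) :=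
    hφ.comp hi.contDiffOn (fun p hp => hp)
  have hΨD : ∀ p ∈ i ⁻¹' Metric.ball ((0 : ℝ), m) δ,
      HasFDerivAt Ψ ((fderiv ℝ φ (i p)).comp L) p := fun p hp => (hφD _ hp).comp p (hid p)
  have hΨ0 : Ψ 0 = m := by change φ (i 0) = m; rw [hi0, hφ0 m h0B]
  let W := i ⁻¹' Metric.ball ((0 : ℝ), m) δ ∩ Ψ ⁻¹' Metric.ball m r
  have hW : IsOpen W := hΨs.continuousOn.isOpen_inter_preimage hW0 Metric.isOpen_ball
  have h0W0 : (0 : Fin (n + 1) → ℝ) ∈ i ⁻¹' Metric.ball ((0 : ℝ), m) δ := by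
    rw [mem_preimage, hi0]; exact h0B
  have h0W : (0 : Fin (n + 1) → ℝ) ∈ W :=
    ⟨h0W0, by rw [mem_preimage, hΨ0]; exact Metric.mem_ball_self hr⟩
  have hΨT : HasFDerivAt Ψ (T : (Fin (n + 1) → ℝ) →L[ℝ] (Fin (n + 1) → ℝ)) 0 := by
    refine (hΨD 0 h0W0).congr_fderiv ?_
    refine ContinuousLinearMap.ext fun q => ?_
    rw [ContinuousLinearMap.comp_apply, hi0, hL]
    have : (P q, T (q - P q • e0)) = P q • ((1 : ℝ), (0 : Fin (n + 1) → ℝ)) +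
      (0, T (q - P q • e0)) := by simp
    rw [this, map_add, map_smul, hφ1 _ h0B, hφ2, hφ0 m h0B, hYX m (Metric.mem_ball_self hr), ← hT]
    simp
  obtain ⟨e, he, h0e, heW, hes⟩ := smooth_ift Ψ W hW (hΨs.mono inter_subset_left) 0 h0W T hΨT
  have hVr : ∀ y ∈ e.target, y ∈ Metric.ball m r := by
    intro y hy
    have := (heW (e.map_target hy)).2
    rwa [mem_preimage, ← he, e.right_inv hy] at this
  refine ⟨e.target, e.symm, e.open_target, ?_, fun y hy => hrU (hVr y hy), hes, ?_, ?_⟩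
  · rw [← hΨ0, ← he]; exact e.map_source h0e
  · rw [← hΨ0, ← he]; exact e.left_inv h0e
  · intro y hy
    have hs := e.map_target hy
    have hD := hΨD _ (heW hs).1
    have hθ : HasFDerivAt e.symm (fderiv ℝ e.symm y) (Ψ (e.symm y)) := by
      rw [← he, e.right_inv hy]
      exact ((hes.contDiffAt (e.open_target.mem_nhds hy)).differentiableAt (by simp)).hasFDerivAt
    have h1 := hθ.comp _ hD
    have h2 : HasFDerivAt (e.symm ∘ Ψ) (ContinuousLinearMap.id ℝ (Fin (n + 1) → ℝ)) (e.symm y) := by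
      refine (hasFDerivAt_id _).congr_of_eventuallyEq ?_
      filter_upwards [e.open_source.mem_nhds hs] with p hp
      rw [← he]; exact e.left_inv hp
    have h3 := h1.unique h2
    have h4 : ∀ q, fderiv ℝ e.symm y (fderiv ℝ φ (i (e.symm y)) (L q)) = q := fun q =>
      congrArg (fun f : (Fin (n + 1) → ℝ) →L[ℝ] (Fin (n + 1) → ℝ) => f q) h3
    refine ⟨?_, fun q => ⟨_, h4 q⟩⟩
    have h5 := h4 e0
    have h6 : L e0 = (1, 0) := by rw [hL, hP]; simp
    have h7 : φ (i (e.symm y)) = y := by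
      change Ψ (e.symm y) = y
      rw [← he]; exact e.right_inv hy
    rw [h6, hφ1 _ (heW hs).1, h7, hYX y (hVr y hy)] at h5
    exact h5

/-- A smooth vector field `X` non-vanishing at `m` admits, around `m`,
a system of homogeneous coordinates `(x, z², …, zⁿ)` with arbitrarily prescribed
weights `w ≠ 0, v₂, …, vₙ`, with `x(m) = 1` and `zⁱ(m) = 0`. -/
theorem stmt_3 (n : ℕ) (U : Set (Fin (n + 1) → ℝ)) (hU : IsOpen U)
    (X : (Fin (n + 1) → ℝ) → (Fin (n + 1) → ℝ)) (hX : ContDiffOn ℝ (⊤ : ℕ∞) X U)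
    (m : Fin (n + 1) → ℝ) (hm : m ∈ U) (hXm : X m ≠ 0)
    (w : ℝ) (hw : w ≠ 0) (v : Fin n → ℝ) :
    ∃ (V : Set (Fin (n + 1) → ℝ)) (x : (Fin (n + 1) → ℝ) → ℝ)
      (z : Fin n → (Fin (n + 1) → ℝ) → ℝ),
      IsOpen V ∧ m ∈ V ∧ V ⊆ U ∧
      ContDiffOn ℝ (⊤ : ℕ∞) x V ∧ (∀ i, ContDiffOn ℝ (⊤ : ℕ∞) (z i) V) ∧
      (∀ y ∈ V, LinearIndependent ℝ
        (Fin.cons (fderiv ℝ x y) (fun i => fderiv ℝ (z i) y) :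
          Fin (n + 1) → (Fin (n + 1) → ℝ) →L[ℝ] ℝ)) ∧
      x m = 1 ∧ (∀ i, z i m = 0) ∧
      (∀ y ∈ V, fderiv ℝ x y (X y) = w * x y) ∧
      (∀ i, ∀ y ∈ V, fderiv ℝ (z i) y (X y) = v i * z i y) := by
  obtain ⟨V, θ, hV, hmV, hVU, hθ, hθm, hθX⟩ := straighten n U hU X hX m hm hXm
  have hc : ∀ j, ContDiffOn ℝ (⊤ : ℕ∞) (fun y => θ y j) V := fun j => (contDiffOn_pi.1 hθ) j
  have hD : ∀ y ∈ V, ∀ j, HasFDerivAt (fun y => θ y j)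
      ((ContinuousLinearMap.proj j).comp (fderiv ℝ θ y)) y := by
    intro y hy j
    have := ((hθ.contDiffAt (hV.mem_nhds hy)).differentiableAt (by simp)).hasFDerivAt
    exact (hasFDerivAt_pi'.1 this) j
  have hx : ∀ y ∈ V, ∀ u, fderiv ℝ (fun y => Real.exp (w * θ y 0)) y u =
      w * Real.exp (w * θ y 0) * (fderiv ℝ θ y u 0) := by
    intro y hy u
    rw [((hD y hy 0).const_mul w).exp.fderiv]
    simp; ring
  have hz : ∀ i : Fin n, ∀ y ∈ V, ∀ u,
      fderiv ℝ (fun y => θ y i.succ * Real.exp (v i * θ y 0)) y u =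
      Real.exp (v i * θ y 0) *
        (fderiv ℝ θ y u i.succ + v i * θ y i.succ * fderiv ℝ θ y u 0) := by
    intro i y hy u
    have h := ((hD y hy i.succ).mul ((hD y hy 0).const_mul (v i)).exp).fderiv
    change fderiv ℝ (fun y => θ y i.succ * Real.exp (v i * θ y 0)) y = _ at h
    rw [h]
    simp; ring
  refine ⟨V, fun y => Real.exp (w * θ y 0), fun i y => θ y i.succ * Real.exp (v i * θ y 0),
    hV, hmV, hVU, ?_, ?_, ?_, ?_, ?_, ?_, ?_⟩
  · exact (contDiffOn_const.mul (hc 0)).exp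
  · exact fun i => (hc i.succ).mul (contDiffOn_const.mul (hc 0)).exp
  · intro y hy
    rw [Fintype.linearIndependent_iff]
    intro g hg
    have hg' : ∀ u, g 0 * (w * Real.exp (w * θ y 0) * (fderiv ℝ θ y u 0)) +
        ∑ i : Fin n, g i.succ * (Real.exp (v i * θ y 0) *
        (fderiv ℝ θ y u i.succ + v i * θ y i.succ * fderiv ℝ θ y u 0)) = 0 := by
      intro u
      have := congrArg (fun f : (Fin (n + 1) → ℝ) →L[ℝ] ℝ => f u) hg
      simp only [Fin.sum_univ_succ, Fin.cons_zero, Fin.cons_succ, ContinuousLinearMap.add_apply,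
        ContinuousLinearMap.sum_apply, ContinuousLinearMap.smul_apply, smul_eq_mul,
        ContinuousLinearMap.zero_apply] at this
      rw [hx y hy u] at this
      simp only [hz _ y hy u] at this
      exact this
    have hs : ∀ j : Fin n, g j.succ = 0 := by
      intro j
      obtain ⟨u, hu⟩ := (hθX y hy).2 (Pi.single j.succ 1)
      have := hg' u
      rw [hu] at this
      simpa [Pi.single_apply, Fin.succ_ne_zero, Real.exp_ne_zero, (Fin.succ_ne_zero j).symm]
        using this
    intro j
    refine Fin.cases ?_ hs j
    obtain ⟨u, hu⟩ := (hθX y hy).2 (Pi.single 0 1)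
    have := hg' u
    rw [hu] at this
    simpa [hs, hw, Real.exp_ne_zero] using this
  · simp [hθm]
  · simp [hθm]
  · intro y hy
    rw [hx y hy, (hθX y hy).1]; simp
  · intro i y hy
    rw [hz i y hy, (hθX y hy).1]; simp; ring
end

section
/- Invariance of weights at a zero of the weight vector field: let w₁,…,wₙ ∈ ℝ and ∇(x) = (w₁x₁,…,wₙxₙ) on ℝⁿ (so ∇(0) = 0). Suppose y¹,…,yⁿ are smooth real functions on an open neighbourhood of 0 ∈ ℝⁿ whose differentials at 0 are linearly independent, and suppose each yᵃ is homogeneous of some weight vₐ, i.e., Σⱼ wⱼ xⱼ ∂ⱼyᵃ(x) = vₐ·yᵃ(x) near 0. Then the weights agree up to permutation: there is a bijection σ of {1,…,n} with vₐ = w_{σ(a)} for every a. -/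
/-- Invariance of weights at a zero of the weight vector field
`∇(x) = (w₁x₁, …, wₙxₙ)`: if `y¹, …, yⁿ` are smooth functions near `0 ∈ ℝⁿ`, with linearly
independent differentials at `0`, each homogeneous of weight `vₐ`, then the weights `(vₐ)`
agree with `(wₐ)` up to a permutation. -/
theorem stmt_4 (n : ℕ) (w : Fin n → ℝ) (U : Set (Fin n → ℝ)) (hU : IsOpen U)
    (h0 : (0 : Fin n → ℝ) ∈ U)
    (y : Fin n → (Fin n → ℝ) → ℝ) (hy : ∀ a, ContDiffOn ℝ (⊤ : ℕ∞) (y a) U)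
    (hind : LinearIndependent ℝ (fun a => fderiv ℝ (y a) 0))
    (v : Fin n → ℝ)
    (hhom : ∀ a, ∀ x ∈ U, fderiv ℝ (y a) x (fun j => w j * x j) = v a * y a x) :
    ∃ σ : Equiv.Perm (Fin n), ∀ a, v a = w (σ a) := by
  classical
  set A : (Fin n → ℝ) →L[ℝ] (Fin n → ℝ) :=
    ContinuousLinearMap.pi (fun j => w j • ContinuousLinearMap.proj (R := ℝ) j) with hA
  have hAx : ∀ x, A x = fun j => w j * x j := by
    intro x; ext j; simp [hA]
  have key : ∀ a h, fderiv ℝ (y a) 0 (A h) = v a * fderiv ℝ (y a) 0 h := by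
    intro a h
    have hc : ContDiffAt ℝ (⊤ : ℕ∞) (y a) 0 := (hy a).contDiffAt (hU.mem_nhds h0)
    have hd : HasFDerivAt (y a) (fderiv ℝ (y a) 0) 0 :=
      (hc.differentiableAt (by simp)).hasFDerivAt
    have hd2 : HasFDerivAt (fderiv ℝ (y a)) (fderiv ℝ (fderiv ℝ (y a)) 0) 0 := by
      have : ContDiffAt ℝ 1 (fderiv ℝ (y a)) 0 :=
        hc.fderiv_right (m := 1) (by
          have : ((1 + 1 : ℕ∞) : WithTop ℕ∞) ≤ ((⊤ : ℕ∞) : WithTop ℕ∞) := WithTop.coe_le_coe.2 le_top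
          exact this)
      exact (this.differentiableAt (by simp)).hasFDerivAt
    have h1 := hd2.clm_apply (A.hasFDerivAt (x := 0))
    have h2 := hd.const_mul (v a)
    have heq : (fun x => fderiv ℝ (y a) x (A x)) =ᶠ[nhds 0] fun x => v a * y a x := by
      filter_upwards [hU.mem_nhds h0] with x hx
      rw [hAx]; exact hhom a x hx
    have h3 := (h2.congr_of_eventuallyEq heq).unique h1
    have h4 := congrArg (fun L => L h) h3
    simpa using h4.symm
  let J : Matrix (Fin n) (Fin n) ℝ := fun a j => fderiv ℝ (y a) 0 (Pi.single j 1)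
  have hJ : ∀ a j, J a j ≠ 0 → v a = w j := by
    intro a j hne
    have h := key a (Pi.single j 1)
    have hs : A (Pi.single j 1) = w j • Pi.single j (1 : ℝ) := by
      rw [hAx]; ext k
      by_cases hk : k = j
      · subst hk; simp
      · simp [hk]
    rw [hs, map_smul, smul_eq_mul] at h
    exact (mul_right_cancel₀ hne h).symm
  let E : ((Fin n → ℝ) →L[ℝ] ℝ) →ₗ[ℝ] (Fin n → ℝ) :=
    { toFun := fun L j => L (Pi.single j 1)
      map_add' := fun _ _ => rfl
      map_smul' := fun _ _ => rfl }
  have hE : LinearMap.ker E = ⊥ := by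
    rw [LinearMap.ker_eq_bot]
    intro L M h
    apply ContinuousLinearMap.coe_injective
    apply LinearMap.pi_ext'
    intro j
    ext
    exact congrFun h j
  have hrow : LinearIndependent ℝ J.row := hind.map' E hE
  have hdet : J.det ≠ 0 :=
    ((Matrix.isUnit_iff_isUnit_det J).1 (Matrix.linearIndependent_rows_iff_isUnit.1 hrow)).ne_zero
  rw [← Matrix.det_transpose, Matrix.det_apply] at hdet
  obtain ⟨σ, -, hσ⟩ := Finset.exists_ne_zero_of_sum_ne_zero hdet
  refine ⟨σ, fun a => hJ a (σ a) fun hz => hσ ?_⟩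
  rw [Finset.prod_eq_zero (Finset.mem_univ a) (by simpa using hz), smul_zero]
end

section
/- Homogeneous solution of ∂f/∂y¹ = g: let w₁,…,wₙ, w ∈ ℝ, let ∇(y) = (w₁y₁,…,wₙyₙ) on ℝⁿ, and let g : ℝⁿ → ℝ be a smooth function homogeneous of weight w with respect to ∇. Then the function f(y) := ∫₀^{y₁} g(s, y₂, …, yₙ) ds is smooth, satisfies ∂f/∂y₁ = g on ℝⁿ, is homogeneous of weight w + w₁ with respect to ∇ (i.e., Σⱼ wⱼ yⱼ ∂ⱼf = (w + w₁)·f), and satisfies f(0) = 0. -/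
open MeasureTheory Set Topology in
theorem aux_hasFDerivAt {E F : Type} [NormedAddCommGroup E] [NormedSpace ℝ E]
    [ProperSpace E] [NormedAddCommGroup F] [NormedSpace ℝ F] [CompleteSpace F]
    (G : E × ℝ → F) (hG : ContDiff ℝ (⊤ : ℕ∞) G) (x₀ : E) :
    HasFDerivAt (fun x => ∫ t in (0:ℝ)..1, G (x, t))
      (∫ t in (0:ℝ)..1, (fderiv ℝ G (x₀, t)).comp (ContinuousLinearMap.inl ℝ E ℝ)) x₀ := by
  have hc : Continuous (fun p : E × ℝ => (fderiv ℝ G p).comp (ContinuousLinearMap.inl ℝ E ℝ)) :=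
    (hG.continuous_fderiv (by simp)).clm_comp continuous_const
  have hGc := hG.continuous
  obtain ⟨C, hC⟩ := ((isCompact_closedBall x₀ 1).prod (isCompact_Icc (a := (0:ℝ)) (b := 1))).exists_bound_of_continuousOn
    hc.continuousOn
  refine intervalIntegral.hasFDerivAt_integral_of_dominated_of_fderiv_le (𝕜 := ℝ)
    (F := fun x t => G (x, t))
    (F' := fun x t => (fderiv ℝ G (x, t)).comp (ContinuousLinearMap.inl ℝ E ℝ))
    (bound := fun _ => C) (Metric.closedBall_mem_nhds x₀ one_pos) ?_ ?_ ?_ ?_ ?_ ?_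
  · refine Filter.Eventually.of_forall fun x => ?_
    exact (hGc.comp (by fun_prop : Continuous fun t : ℝ => (x, t))).aestronglyMeasurable
  · exact (hGc.comp (by fun_prop : Continuous fun t : ℝ => (x₀, t))).intervalIntegrable _ _
  · exact (hc.comp (by fun_prop : Continuous fun t : ℝ => (x₀, t))).aestronglyMeasurable
  · refine Filter.Eventually.of_forall fun t ht x hx => ?_
    rw [uIoc_of_le zero_le_one] at ht
    exact hC (x, t) ⟨hx, ht.1.le, ht.2⟩
  · exact intervalIntegrable_const
  · refine Filter.Eventually.of_forall fun t ht x hx => ?_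
    exact ((hG.differentiable (by simp)) (x, t)).hasFDerivAt.comp x
      (hasFDerivAt_prodMk_left x t)

theorem aux_contDiff {E : Type} [NormedAddCommGroup E] [NormedSpace ℝ E]
    [ProperSpace E] (n : ℕ) : ∀ {F : Type} [NormedAddCommGroup F] [NormedSpace ℝ F]
    [CompleteSpace F] (G : E × ℝ → F) (_ : ContDiff ℝ (⊤ : ℕ∞) G),
    ContDiff ℝ n (fun x => ∫ t in (0:ℝ)..1, G (x, t)) := by
  induction n with
  | zero =>
    intro F _ _ _ G hG
    exact contDiff_zero.2 (continuous_iff_continuousAt.2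
      fun x => (aux_hasFDerivAt G hG x).continuousAt)
  | succ n ih =>
    intro F _ _ _ G hG
    push_cast
    refine contDiff_succ_iff_hasFDerivAt.2 ⟨_, ?_, aux_hasFDerivAt G hG⟩
    exact ih (fun p : E × ℝ => (fderiv ℝ G p).comp (ContinuousLinearMap.inl ℝ E ℝ))
      ((hG.fderiv_right (m := (⊤ : ℕ∞)) (by simp)).clm_comp contDiff_const)

/-- Homogeneous solution of `∂f/∂y¹ = g`: if `g` is smooth and homogeneous of
weight `wt` with respect to `∇(y) = (w₁y₁, …, wₙyₙ)`, then
`f(y) = ∫₀^{y₁} g(s, y₂, …, yₙ) ds` is smooth, solves `∂f/∂y₁ = g`, is homogeneous of weight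
`wt + w₁`, and vanishes at the origin. -/
theorem stmt_5 (n : ℕ) (w : Fin (n + 1) → ℝ) (wt : ℝ)
    (g : (Fin (n + 1) → ℝ) → ℝ) (hg : ContDiff ℝ (⊤ : ℕ∞) g)
    (hhom : ∀ y, fderiv ℝ g y (fun j => w j * y j) = wt * g y)
    (f : (Fin (n + 1) → ℝ) → ℝ)
    (hf : ∀ y, f y = ∫ s in (0:ℝ)..(y 0), g (Function.update y 0 s)) :
    ContDiff ℝ (⊤ : ℕ∞) f ∧
    (∀ y, fderiv ℝ f y (Pi.single 0 1) = g y) ∧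
    (∀ y, fderiv ℝ f y (fun j => w j * y j) = (wt + w 0) * f y) ∧
    f 0 = 0 := by
  have hA : ContDiff ℝ (⊤ : ℕ∞) (fun p : (Fin (n + 1) → ℝ) × ℝ =>
      Function.update p.1 0 (p.2 * p.1 0)) := by
    rw [contDiff_pi]
    intro j
    by_cases hj : j = 0
    · subst hj
      simp only [Function.update_self]
      fun_prop
    · simp only [Function.update_of_ne hj]
      fun_prop
  set G : (Fin (n + 1) → ℝ) × ℝ → ℝ := fun p => g (Function.update p.1 0 (p.2 * p.1 0)) with hGdef
  have hG : ContDiff ℝ (⊤ : ℕ∞) G := hg.comp hA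
  set h : (Fin (n + 1) → ℝ) → ℝ := fun y => ∫ t in (0:ℝ)..1, G (y, t) with hh
  have hfh : f = fun y => y 0 * h y := by
    funext y
    rw [hf]
    have := intervalIntegral.mul_integral_comp_mul_right (a := 0) (b := 1)
      (f := fun s => g (Function.update y 0 s)) (c := y 0)
    simp only [zero_mul, one_mul] at this
    rw [← this]
  have hhs : ContDiff ℝ (⊤ : ℕ∞) h := contDiff_infty.2 fun k => aux_contDiff k G hG
  have hfs : ContDiff ℝ (⊤ : ℕ∞) f := by
    rw [hfh]
    exact (contDiff_apply ℝ ℝ 0).mul hhs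
  have hfd : Differentiable ℝ f := hfs.differentiable (by simp)
  refine ⟨hfs, ?_, ?_, ?_⟩
  · intro y
    have h1 : HasDerivAt (fun x => f (Function.update y 0 x))
        (fderiv ℝ f y (Pi.single 0 1)) (y 0) := by
      have hu := hasDerivAt_update y 0 (y 0)
      have := (hfd (Function.update y 0 (y 0))).hasFDerivAt.comp_hasDerivAt (y 0) hu
      rw [Function.update_eq_self] at this
      exact this
    have h2 : HasDerivAt (fun x => f (Function.update y 0 x)) (g y) (y 0) := by
      have hcont : Continuous fun s => g (Function.update y 0 s) :=
        hg.continuous.comp (continuous_const.update 0 continuous_id)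
      have := intervalIntegral.integral_hasDerivAt_right (hcont.intervalIntegrable 0 (y 0))
        (hcont.stronglyMeasurableAtFilter _ _) hcont.continuousAt
      rw [Function.update_eq_self] at this
      refine this.congr_of_eventuallyEq (Filter.Eventually.of_forall fun x => ?_)
      simp [hf]
    exact h1.unique h2
  · intro y
    have hD := aux_hasFDerivAt G hG y
    have hint : IntervalIntegrable (fun t : ℝ => (fderiv ℝ G (y, t)).comp
        (ContinuousLinearMap.inl ℝ (Fin (n + 1) → ℝ) ℝ)) MeasureTheory.volume 0 1 :=
      (((hG.continuous_fderiv (by simp)).clm_comp continuous_const).comp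
        (by fun_prop : Continuous fun t : ℝ => (y, t))).intervalIntegrable _ _
    have key : fderiv ℝ h y (fun j => w j * y j) = wt * h y := by
      rw [hD.fderiv, ContinuousLinearMap.intervalIntegral_apply hint, hh]
      simp only
      rw [← intervalIntegral.integral_const_mul]
      congr 1
      funext t
      have hL : HasFDerivAt (fun x : Fin (n + 1) → ℝ => Function.update x 0 (t * x 0))
          (ContinuousLinearMap.pi fun j => if j = 0 then t • ContinuousLinearMap.proj (R := ℝ) (φ := fun _ : Fin (n + 1) => ℝ) 0
            else ContinuousLinearMap.proj (R := ℝ) (φ := fun _ : Fin (n + 1) => ℝ) j) y := by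
        rw [hasFDerivAt_pi]
        intro j
        by_cases hj : j = 0
        · subst hj
          simp only [Function.update_self, if_true]
          exact (hasFDerivAt_apply (𝕜 := ℝ) 0 y).const_mul t
        · simp only [Function.update_of_ne hj, if_neg hj]
          exact hasFDerivAt_apply (𝕜 := ℝ) j y
      have e1 : HasFDerivAt (fun x => G (x, t)) _ y :=
        ((hg.differentiable (by simp)) _).hasFDerivAt.comp y hL
      have e2 := HasFDerivAt.comp (f := fun e => (e, t)) y
        ((hG.differentiable (by simp)) (y, t)).hasFDerivAt (hasFDerivAt_prodMk_left (𝕜 := ℝ) y t)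
      rw [e2.unique e1]
      simp only [hGdef]
      rw [← hhom, ContinuousLinearMap.comp_apply]
      congr 1
      funext j
      by_cases hj : j = 0
      · subst hj
        simp
        ring
      · simp [hj]
    have hm := (hasFDerivAt_apply (𝕜 := ℝ) 0 y).fun_mul
        ((hhs.differentiable (by simp)) y).hasFDerivAt
    rw [hfh, hm.fderiv]
    simp [key]
    ring
  · rw [hf]; simp
end

section
/- Homogeneous straightening of commuting vector fields (even case): let ∇(x) = (w₁x₁,…,wₙxₙ) on ℝⁿ, let U ⊆ ℝⁿ be open, and let X₁,…,X_k (1 ≤ k ≤ n) be smooth vector fields on U which are linearly independent at every point of U, pairwise commute ([Xᵢ, Xⱼ] = 0 for all i,j), and are each homogeneous with respect to ∇ (i.e., [∇, Xᵢ] = cᵢ·Xᵢ for some cᵢ ∈ ℝ). Let x₀ ∈ U be such that either ∇(x₀) = 0 or ∇(x₀) is not in the linear span of X₁(x₀),…,X_k(x₀). Then there exist an open neighbourhood V ⊆ U of x₀, real numbers λ₁,…,λₙ, and smooth functions x¹,…,xⁿ : V → ℝ whose differentials are linearly independent at every point of V, such that Σⱼ wⱼ yⱼ ∂ⱼxᵃ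 = λₐ·xᵃ on V for each a, and Dxᵃ(y)(Xᵢ(y)) = δᵢᵃ (Kronecker delta) for all y ∈ V, 1 ≤ i ≤ k, 1 ≤ a ≤ n; that is, in the homogeneous coordinates (xᵃ) one has Xᵢ = ∂/∂xⁱ. -/
open Set Filter Topology
open scoped ContDiff

theorem aux_ift {E F : Type*} [NormedAddCommGroup E] [NormedSpace ℝ E] [CompleteSpace E]
    [NormedAddCommGroup F] [NormedSpace ℝ F] {f : E → F} {U : Set E} {a : E}
    (hU : IsOpen U) (ha : a ∈ U) (hf : ContDiffOn ℝ ∞ f U) (e : E ≃L[ℝ] F)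
    (he : HasFDerivAt f (e : E →L[ℝ] F) a) :
    ∃ (g : F → E) (V : Set F), IsOpen V ∧ f a ∈ V ∧ ContDiffOn ℝ ∞ g V ∧ g (f a) = a ∧
      ∀ y ∈ V, g y ∈ U ∧ f (g y) = y ∧ ∃ e' : E ≃L[ℝ] F,
        HasFDerivAt f (e' : E →L[ℝ] F) (g y) ∧ HasFDerivAt g (e'.symm : F →L[ℝ] E) y := by
  have hfa : ∀ x ∈ U, ContDiffAt ℝ ∞ f x := fun x hx => hf.contDiffAt (hU.mem_nhds hx)
  let P := (hfa a ha).toOpenPartialHomeomorph f he (by simp)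
  have hPf : ∀ x, P x = f x := fun x => rfl
  have haP : a ∈ P.source := (hfa a ha).mem_toOpenPartialHomeomorph_source he (by simp)
  have hcont : ContinuousOn (fderiv ℝ f) U :=
    hf.continuousOn_fderiv_of_isOpen hU (by simp)
  have hW : ∀ᶠ x in 𝓝 a, x ∈ U ∧ fderiv ℝ f x ∈ range ((↑) : (E ≃L[ℝ] F) → E →L[ℝ] F) := by
    refine Filter.Eventually.and (hU.mem_nhds ha) ?_
    have := (hcont.continuousAt (hU.mem_nhds ha))
    refine this ?_
    rw [he.fderiv]
    exact ContinuousLinearEquiv.nhds e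
  obtain ⟨W, hWs, hWo, haW⟩ := eventually_nhds_iff.1 hW
  have hsa : P.symm (f a) = a := by rw [← hPf]; exact P.left_inv haP
  have hVo : IsOpen (P.target ∩ P.symm ⁻¹' W) := P.symm.isOpen_inter_preimage hWo
  have key : ∀ y ∈ P.target ∩ P.symm ⁻¹' W, ∃ e' : E ≃L[ℝ] F,
        HasFDerivAt f (e' : E →L[ℝ] F) (P.symm y) := by
    intro y hy
    obtain ⟨h1, e', h2⟩ := hWs _ hy.2
    refine ⟨e', ?_⟩
    rw [h2]
    exact ((hfa _ h1).differentiableAt (by simp)).hasFDerivAt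
  refine ⟨P.symm, P.target ∩ P.symm ⁻¹' W, hVo, ⟨P.map_source haP, ?_⟩, ?_, hsa, ?_⟩
  · show P.symm (f a) ∈ W
    rw [hsa]; exact haW
  · intro y hy
    obtain ⟨e', h⟩ := key y hy
    exact (P.contDiffAt_symm hy.1 h (hfa _ (hWs _ hy.2).1)).contDiffWithinAt
  · intro y hy
    obtain ⟨e', h⟩ := key y hy
    exact ⟨(hWs _ hy.2).1, P.right_inv hy.1, e', h, P.hasFDerivAt_symm hy.1 h⟩

/-- pointwise application -/
noncomputable def auxApp (E F : Type) [NormedAddCommGroup E] [NormedSpace ℝ E]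
    [NormedAddCommGroup F] [NormedSpace ℝ F] :
    C(unitInterval, E →L[ℝ] F) →L[ℝ] C(unitInterval, E) →L[ℝ] C(unitInterval, F) :=
  LinearMap.mkContinuous₂
    (LinearMap.mk₂ ℝ (fun (A : C(unitInterval, E →L[ℝ] F)) (h : C(unitInterval, E)) =>
        (⟨fun s => A s (h s), by fun_prop⟩ : C(unitInterval, F)))
      (by intros; ext; simp) (by intros; ext; simp) (by intros; ext; simp) (by intros; ext; simp))
    1 (by
      intro A h
      rw [ContinuousMap.norm_le _ (by positivity)]
      intro s
      simp only [one_mul]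
      exact (A s).le_opNorm_of_le (h.norm_coe_le_norm s) |>.trans
        (mul_le_mul_of_nonneg_right (A.norm_coe_le_norm s) (norm_nonneg _)))

theorem auxApp_apply {E F : Type} [NormedAddCommGroup E] [NormedSpace ℝ E]
    [NormedAddCommGroup F] [NormedSpace ℝ F] (A : C(unitInterval, E →L[ℝ] F))
    (h : C(unitInterval, E)) (s : unitInterval) : auxApp E F A h s = A s (h s) := rfl

theorem aux_omega_deriv {E F : Type} [NormedAddCommGroup E] [NormedSpace ℝ E]
    [NormedAddCommGroup F] [NormedSpace ℝ F] (f : C(E, F)) (f' : C(E, E →L[ℝ] F))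
    (hf : ∀ x, HasFDerivAt f (f' x) x) (α : C(unitInterval, E)) :
    HasFDerivAt (fun β : C(unitInterval, E) => f.comp β) (auxApp E F (f'.comp α)) α := by
  rw [hasFDerivAt_iff_isLittleO_nhds_zero, Asymptotics.isLittleO_iff]
  intro ε hε
  have hc : Tendsto (fun β : C(unitInterval, E) => f'.comp β) (𝓝 α) (𝓝 (f'.comp α)) :=
    (ContinuousMap.continuous_postcomp f').tendsto α
  obtain ⟨δ, hδ, hball⟩ := (Metric.tendsto_nhds_nhds (α := C(unitInterval, E)) (β := C(unitInterval, E →L[ℝ] F))).1 hc ε hε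
  filter_upwards [Metric.ball_mem_nhds (0 : C(unitInterval, E)) hδ] with h hh
  rw [mem_ball_zero_iff] at hh
  rw [ContinuousMap.norm_le _ (by positivity)]
  intro s
  simp only [ContinuousMap.sub_apply, ContinuousMap.comp_apply, ContinuousMap.add_apply,
    auxApp_apply]
  have hs : ∀ x ∈ Metric.closedBall (α s) ‖h‖,
      ‖f' x - f' (α s)‖ ≤ ε := by
    intro x hx
    have h1 := @hball (α + ContinuousMap.const _ (x - α s)) (by
      rw [dist_eq_norm]
      simp only [add_sub_cancel_left]
      refine lt_of_le_of_lt ?_ hh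
      rw [ContinuousMap.norm_le _ (by positivity)]
      intro r
      simpa [dist_eq_norm] using hx)
    have h2 := (ContinuousMap.dist_apply_le_dist s).trans h1.le
    simpa [dist_eq_norm] using h2
  have hmv := (convex_closedBall (α s) ‖h‖).norm_image_sub_le_of_norm_hasFDerivWithin_le'
    (f := f) (f' := f') (φ := f' (α s)) (C := ε) (x := α s) (y := α s + h s)
    (fun x hx => (hf x).hasFDerivWithinAt) hs (by simp)
    (by simpa [dist_eq_norm] using h.norm_coe_le_norm s)
  simp only [add_sub_cancel_left] at hmv
  exact hmv.trans (mul_le_mul_of_nonneg_left (h.norm_coe_le_norm s) hε.le)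

theorem aux_omega_nat (E : Type) [NormedAddCommGroup E] [NormedSpace ℝ E] (m : ℕ) :
    ∀ (F : Type) [NormedAddCommGroup F] [NormedSpace ℝ F] (f : C(E, F)), ContDiff ℝ ∞ f →
      ContDiff ℝ m (fun β : C(unitInterval, E) => f.comp β) := by
  induction m with
  | zero =>
    intro F _ _ f _
    exact contDiff_zero.2 (ContinuousMap.continuous_postcomp f)
  | succ m ih =>
    intro F _ _ f hf
    have hd := aux_omega_deriv f ⟨fderiv ℝ f, hf.continuous_fderiv (by simp)⟩
      (fun x => (hf.differentiable (by simp) x).hasFDerivAt)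
    push_cast
    rw [contDiff_succ_iff_fderiv]
    refine ⟨fun α => (hd α).differentiableAt, by simp, ?_⟩
    have : fderiv ℝ (fun β : C(unitInterval, E) => f.comp β) = fun α => auxApp E F
      ((⟨fderiv ℝ f, hf.continuous_fderiv (by simp)⟩ : C(E, E →L[ℝ] F)).comp α) :=
      funext fun α => (hd α).fderiv
    rw [this]
    exact (ContinuousLinearMap.contDiff (E := C(unitInterval, E →L[ℝ] F))
      (F := C(unitInterval, E) →L[ℝ] C(unitInterval, F)) (auxApp E F)).comp
      (ih (E →L[ℝ] F) ⟨fderiv ℝ f, hf.continuous_fderiv (by simp)⟩ (hf.fderiv_right (by simp)))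

theorem aux_omega {E : Type} [NormedAddCommGroup E] [NormedSpace ℝ E]
    {F : Type} [NormedAddCommGroup F] [NormedSpace ℝ F] (f : C(E, F)) (hf : ContDiff ℝ ∞ f) :
      ContDiff ℝ ∞ (fun β : C(unitInterval, E) => f.comp β) :=
  contDiff_infty.2 fun m => aux_omega_nat E m F f hf

/-- integration -/
noncomputable def auxInt (E : Type) [NormedAddCommGroup E] [NormedSpace ℝ E] :
    C(unitInterval, E) →L[ℝ] C(unitInterval, E) :=
  LinearMap.mkContinuous
    { toFun := fun α => ⟨fun s => ∫ r in (0:ℝ)..s, IccExtend (zero_le_one' ℝ) α r, by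
          have h : Continuous (IccExtend (zero_le_one' ℝ) α) := α.continuous.Icc_extend'
          have := intervalIntegral.continuous_primitive
            (fun a b => h.intervalIntegrable (μ := MeasureTheory.volume) a b) 0
          exact this.comp continuous_subtype_val⟩
      map_add' := fun α β => by
        ext s
        have h : Continuous (IccExtend (zero_le_one' ℝ) α) := α.continuous.Icc_extend'
        have h' : Continuous (IccExtend (zero_le_one' ℝ) β) := β.continuous.Icc_extend'
        simp only [ContinuousMap.coe_mk, ContinuousMap.add_apply]
        rw [← intervalIntegral.integral_add (h.intervalIntegrable _ _) (h'.intervalIntegrable _ _)]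
        rfl
      map_smul' := fun c α => by
        ext s
        simp only [ContinuousMap.coe_mk, ContinuousMap.smul_apply, RingHom.id_apply]
        rw [← intervalIntegral.integral_smul]
        rfl } 1 (by
      intro α
      rw [ContinuousMap.norm_le _ (by positivity)]
      intro s
      have := intervalIntegral.norm_integral_le_of_norm_le_const (a := (0:ℝ)) (b := (s:ℝ))
        (f := IccExtend (zero_le_one' ℝ) α) (C := ‖α‖) (fun x _ => α.norm_coe_le_norm _)
      refine this.trans ?_
      rw [sub_zero, abs_of_nonneg s.2.1, one_mul]
      exact mul_le_of_le_one_right (norm_nonneg _) s.2.2)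

theorem auxInt_apply {E : Type} [NormedAddCommGroup E] [NormedSpace ℝ E]
    (α : C(unitInterval, E)) (s : unitInterval) :
    auxInt E α s = ∫ r in (0:ℝ)..s, IccExtend (zero_le_one' ℝ) α r := rfl

/-- differentiation of a primitive -/
theorem auxInt_deriv {E : Type} [NormedAddCommGroup E] [NormedSpace ℝ E] [CompleteSpace E]
    {γ δ : C(unitInterval, E)} {c : E} (h : γ = ContinuousMap.const _ c + auxInt E δ)
    {s : ℝ} (hs : s ∈ Ioo (0:ℝ) 1) :
    HasDerivAt (IccExtend (zero_le_one' ℝ) γ) (IccExtend (zero_le_one' ℝ) δ s) s := by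
  have hc : Continuous (IccExtend (zero_le_one' ℝ) δ) := δ.continuous.Icc_extend'
  have h1 := (intervalIntegral.integral_hasDerivAt_right (hc.intervalIntegrable 0 s)
    (hc.stronglyMeasurableAtFilter _ _) hc.continuousAt).const_add c
  refine h1.congr_of_eventuallyEq ?_
  filter_upwards [Ioo_mem_nhds hs.1 hs.2] with r hr
  rw [IccExtend_of_mem _ _ ⟨hr.1.le, hr.2.le⟩, h]
  rfl

theorem auxInt_ftc {E : Type} [NormedAddCommGroup E] [NormedSpace ℝ E] [CompleteSpace E]
    {γ δ : C(unitInterval, E)}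
    (h : ∀ s ∈ Ioo (0:ℝ) 1,
      HasDerivAt (IccExtend (zero_le_one' ℝ) γ) (IccExtend (zero_le_one' ℝ) δ s) s) :
    γ = ContinuousMap.const _ (γ 0) + auxInt E δ := by
  ext1 s
  have hc : Continuous (IccExtend (zero_le_one' ℝ) δ) := δ.continuous.Icc_extend'
  have hc' : Continuous (IccExtend (zero_le_one' ℝ) γ) := γ.continuous.Icc_extend'
  have := intervalIntegral.integral_eq_sub_of_hasDerivAt_of_le s.2.1 hc'.continuousOn
    (fun r hr => h r ⟨hr.1, hr.2.trans_le s.2.2⟩) (hc.intervalIntegrable _ _)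
  simp only [ContinuousMap.add_apply, ContinuousMap.const_apply, auxInt_apply]
  rw [this, IccExtend_of_mem _ _ s.2, IccExtend_left]
  simp

/-- constants -/
noncomputable def auxConst (E : Type) [NormedAddCommGroup E] [NormedSpace ℝ E] :
    E →L[ℝ] C(unitInterval, E) :=
  LinearMap.mkContinuous
    { toFun := fun x => ContinuousMap.const _ x
      map_add' := fun _ _ => rfl
      map_smul' := fun _ _ => rfl } 1 (by
      intro x
      rw [ContinuousMap.norm_le _ (by positivity)]
      intro s
      show ‖x‖ ≤ 1 * ‖x‖
      simp)

theorem auxConst_apply {E : Type} [NormedAddCommGroup E] [NormedSpace ℝ E] (x : E) :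
    auxConst E x = ContinuousMap.const _ x := rfl

/-- the Picard map -/
noncomputable def auxK {E : Type} [NormedAddCommGroup E] [NormedSpace ℝ E] {k : ℕ}
    (X : Fin k → C(E, E)) (q : (E × (Fin k → ℝ)) × C(unitInterval, E)) : C(unitInterval, E) :=
  auxConst E q.1.1 + auxInt E (∑ i, q.1.2 i • (X i).comp q.2)

/-- linear map -/
noncomputable def auxDK {E : Type} [NormedAddCommGroup E] [NormedSpace ℝ E] {k : ℕ}
    (X : Fin k → C(E, E)) (X' : Fin k → C(E, E →L[ℝ] E))
    (q d : (E × (Fin k → ℝ)) × C(unitInterval, E)) : C(unitInterval, E) :=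
  auxConst E d.1.1 + auxInt E
    (∑ i, (q.1.2 i • auxApp E E ((X' i).comp q.2) d.2 + d.1.2 i • (X i).comp q.2))

theorem auxK_deriv {E : Type} [NormedAddCommGroup E] [NormedSpace ℝ E] {k : ℕ}
    (X : Fin k → C(E, E)) (X' : Fin k → C(E, E →L[ℝ] E))
    (hX : ∀ i x, HasFDerivAt (X i) (X' i x) x) (q : (E × (Fin k → ℝ)) × C(unitInterval, E)) :
    ∃ L : (E × (Fin k → ℝ)) × C(unitInterval, E) →L[ℝ] C(unitInterval, E),
      HasFDerivAt (auxK X) L q ∧ ∀ d, L d = auxDK X X' q d := by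
  have h1 : HasFDerivAt (fun q : (E × (Fin k → ℝ)) × C(unitInterval, E) => q.2)
    (ContinuousLinearMap.snd ℝ (E × (Fin k → ℝ)) C(unitInterval, E)) q := hasFDerivAt_snd
  have h2 : ∀ i, HasFDerivAt (fun q : (E × (Fin k → ℝ)) × C(unitInterval, E) => (X i).comp q.2)
    _ q := fun i =>
      HasFDerivAt.comp q (aux_omega_deriv (X i) (X' i) (hX i) q.2) h1
  have h3 : ∀ i, HasFDerivAt (fun q : (E × (Fin k → ℝ)) × C(unitInterval, E) => q.1.2 i)
    ((ContinuousLinearMap.proj i).comp ((ContinuousLinearMap.snd ℝ E (Fin k → ℝ)).comp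
      (ContinuousLinearMap.fst ℝ (E × (Fin k → ℝ)) C(unitInterval, E)))) q := fun i =>
      ContinuousLinearMap.hasFDerivAt ((ContinuousLinearMap.proj i).comp ((ContinuousLinearMap.snd ℝ E (Fin k → ℝ)).comp
      (ContinuousLinearMap.fst ℝ (E × (Fin k → ℝ)) C(unitInterval, E))))
  have h4 := HasFDerivAt.fun_sum (u := Finset.univ) fun i _ => (h3 i).smul (h2 i)
  have h5 := (auxInt E).hasFDerivAt.comp q h4
  have h6 : HasFDerivAt (fun q : (E × (Fin k → ℝ)) × C(unitInterval, E) => auxConst E q.1.1)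
    ((auxConst E).comp ((ContinuousLinearMap.fst ℝ E (Fin k → ℝ)).comp
      (ContinuousLinearMap.fst ℝ (E × (Fin k → ℝ)) C(unitInterval, E)))) q :=
      ContinuousLinearMap.hasFDerivAt ((auxConst E).comp ((ContinuousLinearMap.fst ℝ E (Fin k → ℝ)).comp
      (ContinuousLinearMap.fst ℝ (E × (Fin k → ℝ)) C(unitInterval, E))))
  refine ⟨_, h6.add h5, fun d => ?_⟩
  simp [auxDK]

theorem auxK_contDiff {E : Type} [NormedAddCommGroup E] [NormedSpace ℝ E] {k : ℕ}
    (X : Fin k → C(E, E)) (hX : ∀ i, ContDiff ℝ ∞ (X i)) : ContDiff ℝ ∞ (auxK X) := by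
  unfold auxK
  refine ContDiff.add ((auxConst E).contDiff.comp (contDiff_fst.comp contDiff_fst))
    ((auxInt E).contDiff.comp (ContDiff.sum fun i _ => ContDiff.fun_smul ?_
      ((aux_omega (X i) (hX i)).comp contDiff_snd)))
  exact (contDiff_apply ℝ ℝ i).comp (contDiff_snd.comp contDiff_fst)

theorem aux_flow {E : Type} [NormedAddCommGroup E] [NormedSpace ℝ E] [CompleteSpace E] {k : ℕ}
    (X : Fin k → C(E, E)) (hX : ∀ i, ContDiff ℝ ∞ (X i)) (X' : Fin k → C(E, E →L[ℝ] E))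
    (hX' : ∀ i x, HasFDerivAt (X i) (X' i x) x) (x₀ : E) (B : Set E) (hB : B ∈ 𝓝 x₀) :
    ∃ (α : E × (Fin k → ℝ) → C(unitInterval, E)) (V : Set (E × (Fin k → ℝ))),
      IsOpen V ∧ (x₀, 0) ∈ V ∧ ContDiffOn ℝ ∞ α V ∧ ∀ p ∈ V,
        (∀ s, α p s ∈ B) ∧ α p = auxK X (p, α p) ∧
        ∀ d J, J = auxDK X X' (p, α p) (d, J) → fderiv ℝ α p d = J := by
  classical
  let H : (E × (Fin k → ℝ)) × C(unitInterval, E) → (E × (Fin k → ℝ)) × C(unitInterval, E) :=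
    fun q => (q.1, q.2 - auxK X q)
  have hH : ContDiff ℝ ∞ H := contDiff_fst.prodMk (contDiff_snd.sub (auxK_contDiff X hX))
  have hH' : ∀ q, ∃ L : (E × (Fin k → ℝ)) × C(unitInterval, E) →L[ℝ]
      (E × (Fin k → ℝ)) × C(unitInterval, E), HasFDerivAt H L q ∧
        ∀ d, L d = (d.1, d.2 - auxDK X X' q d) := by
    intro q
    obtain ⟨L, h1, h2⟩ := auxK_deriv X X' hX' q
    refine ⟨_, hasFDerivAt_fst.prodMk (hasFDerivAt_snd.sub h1), fun d => ?_⟩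
    simp [h2]
  let q₀ : (E × (Fin k → ℝ)) × C(unitInterval, E) := ((x₀, 0), auxConst E x₀)
  have hHq₀ : H q₀ = ((x₀, 0), 0) := by simp [H, q₀, auxK]
  -- derivative at base point
  let M : E × (Fin k → ℝ) →L[ℝ] C(unitInterval, E) :=
    (auxConst E).comp (ContinuousLinearMap.fst ℝ _ _) + (auxInt E).comp
      (∑ i, ((ContinuousLinearMap.proj i).comp
        (ContinuousLinearMap.snd ℝ E (Fin k → ℝ))).smulRight ((X i).comp q₀.2))
  let e := ContinuousLinearEquiv.skewProd (ContinuousLinearEquiv.refl ℝ (E × (Fin k → ℝ)))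
    (ContinuousLinearEquiv.refl ℝ C(unitInterval, E)) (-M)
  have he : HasFDerivAt H (e : _ →L[ℝ] _) q₀ := by
    obtain ⟨L, h1, h2⟩ := hH' q₀
    convert h1 using 1
    refine ContinuousLinearMap.ext fun d => ?_
    rw [h2]
    simp [e, M, auxDK, q₀, sub_eq_add_neg]
  obtain ⟨g, V₀, hV₀, hmem, hg, hg0, hgV⟩ := aux_ift isOpen_univ (mem_univ q₀) hH.contDiffOn e he
  rw [hHq₀] at hmem hg0
  let ι : E × (Fin k → ℝ) → (E × (Fin k → ℝ)) × C(unitInterval, E) := fun p => (p, 0)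
  have hι : ContDiff ℝ ∞ ι := contDiff_id.prodMk contDiff_const
  let α : E × (Fin k → ℝ) → C(unitInterval, E) := fun p => (g (ι p)).2
  let V₁ := ι ⁻¹' V₀
  have hV₁ : IsOpen V₁ := hV₀.preimage hι.continuous
  have hα : ContDiffOn ℝ ∞ α V₁ :=
    contDiff_snd.comp_contDiffOn (hg.comp hι.contDiffOn (fun p hp => hp))
  have hp₀ : ((x₀, 0) : E × (Fin k → ℝ)) ∈ V₁ := hmem
  obtain ⟨r, hr, hrB⟩ := Metric.mem_nhds_iff.1 hB
  have hα0 : α (x₀, 0) = auxConst E x₀ := by simp [α, ι, hg0, q₀]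
  have hV₂ : IsOpen (V₁ ∩ α ⁻¹' Metric.ball (auxConst E x₀) r) :=
    hα.continuousOn.isOpen_inter_preimage hV₁ Metric.isOpen_ball
  refine ⟨α, V₁ ∩ α ⁻¹' Metric.ball (auxConst E x₀) r, hV₂, ⟨hp₀, ?_⟩,
    hα.mono inter_subset_left, ?_⟩
  · simp [hα0, hr]
  · intro p hp
    obtain ⟨-, h2, e', h3, h4⟩ := hgV (ι p) hp.1
    have hgp : g (ι p) = (p, α p) := by
      refine Prod.ext ?_ rfl
      have := congrArg Prod.fst h2
      simpa [H, ι] using this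
    refine ⟨fun s => hrB ?_, ?_, ?_⟩
    · have := hp.2
      rw [mem_preimage, Metric.mem_ball] at this
      exact lt_of_le_of_lt (ContinuousMap.dist_apply_le_dist s) this
    · have := congrArg Prod.snd h2
      rw [hgp] at this
      simpa [H, ι, sub_eq_zero] using this
    · intro d J hJ
      obtain ⟨L, h5, h6⟩ := hH' (g (ι p))
      have h7 : (e' : _ →L[ℝ] _) = L := h3.unique h5
      have h8 : e' (d, J) = (d, 0) := by
        have : e' (d, J) = L (d, J) := by rw [← h7]; rfl
        rw [this, h6, hgp, ← hJ]
        simp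
      have h9 : HasFDerivAt ι (ContinuousLinearMap.inl ℝ _ _) p :=
        (ContinuousLinearMap.inl ℝ (E × (Fin k → ℝ)) C(unitInterval, E)).hasFDerivAt
      have h10 : HasFDerivAt α _ p := hasFDerivAt_snd.comp p (h4.comp p h9)
      rw [h10.fderiv]
      have h11 : e'.symm (d, 0) = (d, J) := by rw [← h8]; simp
      simp [h11]

theorem aux_flow2 {E : Type} [NormedAddCommGroup E] [NormedSpace ℝ E] [CompleteSpace E] {k : ℕ}
    (X : Fin k → E → E) (hX : ∀ i, ContDiff ℝ ∞ (X i)) (x₀ : E) (B : Set E) (hB : B ∈ 𝓝 x₀)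
    (W : E →L[ℝ] E) (c : Fin k → ℝ)
    (hcomm : ∀ i j, ∀ y ∈ B, fderiv ℝ (X j) y (X i y) = fderiv ℝ (X i) y (X j y))
    (hhom : ∀ i, ∀ y ∈ B, fderiv ℝ (X i) y (W y) = W (X i y) + c i • X i y) :
    ∃ (Φ : E × (Fin k → ℝ) → E) (V : Set (E × (Fin k → ℝ))),
      IsOpen V ∧ (x₀, 0) ∈ V ∧ ContDiffOn ℝ ∞ Φ V ∧ Φ (x₀, 0) = x₀ ∧
      (∀ v, fderiv ℝ Φ (x₀, 0) (v, 0) = v) ∧ ∀ p ∈ V,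
        Φ p ∈ B ∧ (∀ i, fderiv ℝ Φ p (0, Pi.single i 1) = X i (Φ p)) ∧
        fderiv ℝ Φ p (W p.1, fun i => - c i * p.2 i) = W (Φ p) := by
  let Xc : Fin k → C(E, E) := fun i => ⟨X i, (hX i).continuous⟩
  let X' : Fin k → C(E, E →L[ℝ] E) := fun i => ⟨fderiv ℝ (X i), (hX i).continuous_fderiv (by simp)⟩
  have hX' : ∀ i x, HasFDerivAt (Xc i) (X' i x) x := fun i x =>
    ((hX i).differentiable (by simp) x).hasFDerivAt
  obtain ⟨α, V, hV, hmem, hα, h⟩ := aux_flow Xc hX X' hX' x₀ B hB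
  let ev : C(unitInterval, E) →L[ℝ] E := ContinuousMap.evalCLM ℝ (1 : unitInterval)
  have hfd : ∀ p ∈ V, ∀ d, fderiv ℝ (fun p => α p 1) p d = fderiv ℝ α p d 1 := by
    intro p hp d
    have h1 : HasFDerivAt α (fderiv ℝ α p) p :=
      ((hα.contDiffAt (hV.mem_nhds hp)).differentiableAt (by simp)).hasFDerivAt
    have h2 : HasFDerivAt (fun p => α p 1) _ p := ev.hasFDerivAt.comp p h1
    rw [h2.fderiv]; rfl
  have hder : ∀ p ∈ V, ∀ s ∈ Ioo (0:ℝ) 1, HasDerivAt (IccExtend (zero_le_one' ℝ) (α p))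
      (∑ i, p.2 i • X i (IccExtend (zero_le_one' ℝ) (α p) s)) s := by
    intro p hp s hs
    have := auxInt_deriv (h p hp).2.1 hs
    convert this using 1
    simp [IccExtend, Xc]
  have hX1 : ∀ p ∈ V, ∀ i, ∀ s ∈ Ioo (0:ℝ) 1,
      HasDerivAt (fun s => X i (IccExtend (zero_le_one' ℝ) (α p) s))
      (∑ j, p.2 j • fderiv ℝ (X i) (IccExtend (zero_le_one' ℝ) (α p) s)
        (X j (IccExtend (zero_le_one' ℝ) (α p) s))) s := by
    intro p hp i s hs
    have h2 := (((hX i).differentiable (by simp) (IccExtend (zero_le_one' ℝ) (α p) s)).hasFDerivAt).comp_hasDerivAt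
      s (hder p hp s hs)
    refine h2.congr_deriv ?_
    simp only [map_sum, map_smul]
  have hBe : ∀ p ∈ V, ∀ s, IccExtend (zero_le_one' ℝ) (α p) s ∈ B := fun p hp s => (h p hp).1 _
  have h0 : α (x₀, 0) = auxConst E x₀ := by
    have := (h _ hmem).2.1
    rw [this]; simp [auxK]
  have hst : ∀ p ∈ V, α p 0 = p.1 := by
    intro p hp
    rw [(h p hp).2.1]; simp [auxK, auxInt_apply, auxConst_apply]
  refine ⟨fun p => α p 1, V, hV, hmem, ?_, ?_, ?_, ?_⟩
  · exact ev.contDiff.comp_contDiffOn hα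
  · simp [h0, auxConst_apply]
  · intro v
    rw [hfd _ hmem]
    rw [(h _ hmem).2.2 (v, 0) (auxConst E v) (by simp [auxDK])]
    rfl
  · intro p hp
    refine ⟨(h p hp).1 _, ?_, ?_⟩
    · intro i
      rw [hfd _ hp]
      let J : C(unitInterval, E) := ⟨fun s => (s : ℝ) • X i (α p s), by
        have := (hX i).continuous; fun_prop⟩
      rw [(h _ hp).2.2 (0, Pi.single i 1) J]
      · simp [J]
      · unfold auxDK
        simp only [map_zero, zero_add]
        have := auxInt_ftc (γ := J) (δ := (∑ j, (p.2 j • auxApp E E ((X' j).comp (α p)) J +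
          (Pi.single i 1 : Fin k → ℝ) j • (Xc j).comp (α p)))) ?_
        · have h3 : J 0 = 0 := by simp [J]
          rw [h3] at this
          convert this using 1
          exact (zero_add _).symm
        · intro s hs
          have h4 := (hasDerivAt_id s).smul (hX1 p hp i s hs)
          refine (h4.congr_of_eventuallyEq ?_).congr_deriv ?_
          · filter_upwards [Ioo_mem_nhds hs.1 hs.2] with r hr
            simp only [IccExtend_of_mem _ _ (Ioo_subset_Icc_self hr), Pi.smul_apply', id]
            rfl
          · have hsI := Ioo_subset_Icc_self hs
            have hB' := hBe p hp s
            simp only [IccExtend_of_mem _ _ hsI] at hB' ⊢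
            simp only [ContinuousMap.coe_sum, Finset.sum_apply, ContinuousMap.add_apply,
              ContinuousMap.smul_apply, auxApp_apply, Finset.sum_add_distrib]
            congr 1
            · rw [id, Finset.smul_sum]
              refine Finset.sum_congr rfl fun j _ => ?_
              simp only [J, X', ContinuousMap.comp_apply, ContinuousMap.coe_mk, map_smul]
              rw [hcomm j i _ hB', smul_comm]
            · simp [Pi.single_apply, Xc]
    · rw [hfd _ hp]
      let J : C(unitInterval, E) := (⟨W, W.continuous⟩ : C(E, E)).comp (α p)
      rw [(h _ hp).2.2 (W p.1, fun i => - c i * p.2 i) J]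
      · simp [J]
      · unfold auxDK
        have := auxInt_ftc (γ := J) (δ := (∑ j, (p.2 j • auxApp E E ((X' j).comp (α p)) J +
          (- c j * p.2 j) • (Xc j).comp (α p)))) ?_
        · have h3 : J 0 = W p.1 := by simp [J, hst p hp]
          rw [h3] at this
          exact this
        · intro s hs
          have h4 := W.hasFDerivAt.comp_hasDerivAt s (hder p hp s hs)
          refine (h4.congr_of_eventuallyEq ?_).congr_deriv ?_
          · filter_upwards [Ioo_mem_nhds hs.1 hs.2] with r hr
            simp only [IccExtend_of_mem _ _ (Ioo_subset_Icc_self hr), Function.comp]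
            rfl
          · have hsI := Ioo_subset_Icc_self hs
            have hB' := hBe p hp s
            simp only [IccExtend_of_mem _ _ hsI] at hB' ⊢
            simp only [ContinuousMap.coe_sum, Finset.sum_apply, ContinuousMap.add_apply,
              ContinuousMap.smul_apply, auxApp_apply, map_sum, map_smul]
            refine Finset.sum_congr rfl fun j _ => ?_
            simp only [J, X', Xc, ContinuousMap.comp_apply, ContinuousMap.coe_mk]
            rw [hhom j _ hB']
            module

theorem aux_cutoff {E : Type} [NormedAddCommGroup E] [NormedSpace ℝ E] [HasContDiffBump E]
    [FiniteDimensional ℝ E]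
    {k : ℕ} {U : Set E} (hU : IsOpen U) (X : Fin k → E → E)
    (hX : ∀ i, ContDiffOn ℝ ∞ (X i) U) {x₀ : E} (hx₀ : x₀ ∈ U) :
    ∃ (Y : Fin k → E → E) (B : Set E), IsOpen B ∧ x₀ ∈ B ∧ B ⊆ U ∧
      (∀ i, ContDiff ℝ ∞ (Y i)) ∧ ∀ i, ∀ y ∈ B, Y i y = X i y := by
  obtain ⟨r, hr, hrU⟩ := Metric.nhds_basis_closedBall.mem_iff.1 (hU.mem_nhds hx₀)
  let f : ContDiffBump x₀ := ⟨r / 2, r, by positivity, by linarith⟩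
  refine ⟨fun i y => f y • X i y, Metric.ball x₀ (r / 2), Metric.isOpen_ball,
    Metric.mem_ball_self (by positivity), ?_, ?_, ?_⟩
  · exact (Metric.ball_subset_closedBall.trans
      (Metric.closedBall_subset_closedBall (by linarith))).trans hrU
  · intro i
    rw [contDiff_iff_contDiffAt]
    intro y
    by_cases hy : y ∈ U
    · exact f.contDiff.contDiffAt.smul ((hX i).contDiffAt (hU.mem_nhds hy))
    · have hy' : y ∈ (Metric.closedBall x₀ r)ᶜ := fun h => hy (hrU h)
      refine (contDiffAt_const (c := (0 : E))).congr_of_eventuallyEq ?_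
      filter_upwards [Metric.isClosed_closedBall.isOpen_compl.mem_nhds hy'] with z hz
      have : f z = 0 := f.zero_of_le_dist (by
        simp only [mem_compl_iff, Metric.mem_closedBall, not_le] at hz
        exact hz.le)
      simp [this]
  · intro i y hy
    have : f y = 1 := f.one_of_mem_closedBall (Metric.ball_subset_closedBall hy)
    simp [this]

theorem aux_straight (n k : ℕ) (hkn : k ≤ n) (w : Fin n → ℝ)
    (U : Set (Fin n → ℝ)) (hU : IsOpen U)
    (X : Fin k → (Fin n → ℝ) → (Fin n → ℝ))
    (hX : ∀ i, ContDiffOn ℝ ∞ (X i) U)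
    (hcomm : ∀ i j, ∀ y ∈ U,
      fderiv ℝ (X j) y (X i y) - fderiv ℝ (X i) y (X j y) = 0)
    (c : Fin k → ℝ)
    (hhom : ∀ i, ∀ y ∈ U,
      fderiv ℝ (X i) y (fun j => w j * y j) - (fun j => w j * X i y j) = c i • X i y)
    (x₀ : Fin n → ℝ) (hx₀ : x₀ ∈ U)
    (σ : (Fin n → ℝ) → (Fin n → ℝ)) (S : Set (Fin n → ℝ)) (hS : IsOpen S)
    (u₀ : Fin n → ℝ) (hu₀ : u₀ ∈ S) (hσ : ContDiffOn ℝ ∞ σ S) (hσ0 : σ u₀ = x₀)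
    (hu₀k : ∀ i : Fin k, u₀ (Fin.castLE hkn i) = 0)
    (lam : Fin n → ℝ) (hlam : ∀ i : Fin k, lam (Fin.castLE hkn i) = - c i)
    (hσk : ∀ u ∈ S, ∀ i : Fin k, fderiv ℝ σ u (Pi.single (Fin.castLE hkn i) 1) = 0)
    (hσN : ∀ u ∈ S, fderiv ℝ σ u (fun a => lam a * u a) = fun j => w j * σ u j)
    (hLI : LinearIndependent ℝ (fun a : Fin n => if h : (a : ℕ) < k then X ⟨a, h⟩ x₀ else
      fderiv ℝ σ u₀ (Pi.single a 1))) :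
    ∃ (V : Set (Fin n → ℝ)) (lam : Fin n → ℝ) (x : Fin n → (Fin n → ℝ) → ℝ),
      IsOpen V ∧ x₀ ∈ V ∧ V ⊆ U ∧
      (∀ a, ContDiffOn ℝ ∞ (x a) V) ∧
      (∀ y ∈ V, LinearIndependent ℝ (fun a => fderiv ℝ (x a) y)) ∧
      (∀ a, ∀ y ∈ V, fderiv ℝ (x a) y (fun j => w j * y j) = lam a * x a y) ∧
      (∀ (i : Fin k) (a : Fin n), ∀ y ∈ V,
        fderiv ℝ (x a) y (X i y) = if a = Fin.castLE hkn i then 1 else 0) := by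
  obtain ⟨Y, B, hB, hxB, hBU, hY, hYX⟩ := aux_cutoff hU X hX hx₀
  let W : (Fin n → ℝ) →L[ℝ] (Fin n → ℝ) :=
    ContinuousLinearMap.pi fun j => w j • ContinuousLinearMap.proj j
  have hW : ∀ y, W y = fun j => w j * y j := fun y => by ext j; simp [W]
  have hfY : ∀ i, ∀ y ∈ B, fderiv ℝ (Y i) y = fderiv ℝ (X i) y := by
    intro i y hy
    refine Filter.EventuallyEq.fderiv_eq ?_
    filter_upwards [hB.mem_nhds hy] with z hz using hYX i z hz
  obtain ⟨Φ, V, hV, hmem, hΦ, hΦ0, hΦ1, hΦV⟩ := aux_flow2 Y hY x₀ B (hB.mem_nhds hxB) W c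
    (by
      intro i j y hy
      rw [hfY _ y hy, hfY _ y hy, hYX _ y hy, hYX _ y hy]
      exact sub_eq_zero.1 (hcomm i j y (hBU hy)))
    (by
      intro i y hy
      rw [hfY _ y hy, hYX _ y hy, hW, hW]
      rw [← hhom i y (hBU hy)]; abel)
  let τ : (Fin n → ℝ) →L[ℝ] (Fin k → ℝ) :=
    ContinuousLinearMap.pi fun i => ContinuousLinearMap.proj (Fin.castLE hkn i)
  have hτ : ∀ u i, τ u i = u (Fin.castLE hkn i) := fun u i => rfl
  let ρ : (Fin n → ℝ) → (Fin n → ℝ) × (Fin k → ℝ) := fun u => (σ u, τ u)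
  have hρ : ContDiffOn ℝ ∞ ρ S := hσ.prodMk τ.contDiff.contDiffOn
  have hρ0 : ρ u₀ = (x₀, 0) := by
    refine Prod.ext hσ0 ?_
    ext i
    exact hu₀k i
  have hD : IsOpen (S ∩ ρ ⁻¹' V) := hρ.continuousOn.isOpen_inter_preimage hS hV
  have hu₀D : u₀ ∈ S ∩ ρ ⁻¹' V := ⟨hu₀, by rw [mem_preimage, hρ0]; exact hmem⟩
  let Ψ : (Fin n → ℝ) → (Fin n → ℝ) := fun u => Φ (ρ u)
  have hΨ : ContDiffOn ℝ ∞ Ψ (S ∩ ρ ⁻¹' V) :=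
    hΦ.comp (hρ.mono inter_subset_left) (fun u hu => hu.2)
  have hΨd : ∀ u ∈ S ∩ ρ ⁻¹' V, HasFDerivAt Ψ
      ((fderiv ℝ Φ (ρ u)).comp ((fderiv ℝ σ u).prod τ)) u := by
    intro u hu
    have h1 : HasFDerivAt σ (fderiv ℝ σ u) u :=
      ((hσ.contDiffAt (hS.mem_nhds hu.1)).differentiableAt (by simp)).hasFDerivAt
    have h2 : HasFDerivAt Φ (fderiv ℝ Φ (ρ u)) (ρ u) :=
      ((hΦ.contDiffAt (hV.mem_nhds hu.2)).differentiableAt (by simp)).hasFDerivAt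
    exact h2.comp u (h1.prodMk τ.hasFDerivAt)
  have hτs : ∀ i : Fin k, τ (Pi.single (Fin.castLE hkn i) 1) = Pi.single i 1 := by
    intro i
    ext j
    simp [hτ, Pi.single_apply, Fin.ext_iff]
  have hΨX : ∀ u ∈ S ∩ ρ ⁻¹' V, ∀ i : Fin k, fderiv ℝ Ψ u (Pi.single (Fin.castLE hkn i) 1)
      = X i (Ψ u) := by
    intro u hu i
    rw [(hΨd u hu).fderiv]
    have := (hΦV _ hu.2)
    simp only [ContinuousLinearMap.comp_apply, ContinuousLinearMap.prod_apply, hσk u hu.1 i, hτs]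
    rw [this.2.1 i]
    exact hYX i _ this.1
  have hΨN : ∀ u ∈ S ∩ ρ ⁻¹' V, fderiv ℝ Ψ u (fun a => lam a * u a)
      = fun j => w j * Ψ u j := by
    intro u hu
    rw [(hΨd u hu).fderiv]
    have := (hΦV _ hu.2).2.2
    rw [hW, hW] at this
    rw [← this]
    simp only [ContinuousLinearMap.comp_apply, ContinuousLinearMap.prod_apply, hσN u hu.1]
    congr 2
    ext i
    simp [hτ, hlam, ρ]
  have hΨ0 : Ψ u₀ = x₀ := by simp only [Ψ, hρ0, hΦ0]
  have hbasis : ∀ a, fderiv ℝ Ψ u₀ (Pi.single a 1) = if h : (a : ℕ) < k then X ⟨a, h⟩ x₀ else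
      fderiv ℝ σ u₀ (Pi.single a 1) := by
    intro a
    split_ifs with h
    · have := hΨX u₀ hu₀D ⟨a, h⟩
      rw [hΨ0] at this
      exact this
    · rw [(hΨd u₀ hu₀D).fderiv, hρ0]
      simp only [ContinuousLinearMap.comp_apply, ContinuousLinearMap.prod_apply]
      have : τ (Pi.single a 1) = 0 := by
        ext i
        rw [hτ, Pi.single_apply, if_neg]
        · rfl
        · rintro rfl
          exact h i.2
      rw [this, hΦ1]
  have hinj : Function.Injective (fderiv ℝ Ψ u₀ : (Fin n → ℝ) →ₗ[ℝ] (Fin n → ℝ)) := by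
    rw [← LinearMap.ker_eq_bot, LinearMap.ker_eq_bot']
    intro v hv
    have h1 : ∑ a, v a • fderiv ℝ Ψ u₀ (Pi.single a 1) = 0 := by
      rw [← hv]
      conv_rhs => rw [pi_eq_sum_univ' v]
      simp only [ContinuousLinearMap.coe_coe, map_sum, map_smul]
    simp only [hbasis] at h1
    ext a
    exact Fintype.linearIndependent_iff.1 hLI v h1 a
  let e : (Fin n → ℝ) ≃L[ℝ] (Fin n → ℝ) :=
    (LinearEquiv.ofInjectiveEndo _ hinj).toContinuousLinearEquiv
  have he : HasFDerivAt Ψ (e : (Fin n → ℝ) →L[ℝ] (Fin n → ℝ)) u₀ := by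
    have h1 := (hΨd u₀ hu₀D).differentiableAt.hasFDerivAt
    convert h1 using 1
    ext1 v
    rfl
  obtain ⟨g, O, hO, hmO, hg, hg0, hgO⟩ := aux_ift hD hu₀D hΨ e he
  rw [hΨ0] at hmO
  have hfx : ∀ y ∈ O, ∃ e' : (Fin n → ℝ) ≃L[ℝ] (Fin n → ℝ),
      (∀ v, fderiv ℝ Ψ (g y) v = e' v) ∧ ∀ a v, fderiv ℝ (fun z => g z a) y v = e'.symm v a := by
    intro y hy
    obtain ⟨-, -, e', h1, h2⟩ := hgO y hy
    refine ⟨e', fun v => by rw [h1.fderiv]; rfl, fun a v => ?_⟩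
    have := (hasFDerivAt_pi'.1 h2 a)
    rw [this.fderiv]; rfl
  refine ⟨O, lam, fun a y => g y a, hO, hmO, ?_, ?_, ?_, ?_, ?_⟩
  · intro y hy
    obtain ⟨h1, h2, -⟩ := hgO y hy
    rw [← h2]
    exact hBU (hΦV _ h1.2).1
  · intro a
    exact (contDiff_apply ℝ ℝ a).comp_contDiffOn hg
  · intro y hy
    obtain ⟨e', -, h2⟩ := hfx y hy
    rw [Fintype.linearIndependent_iff]
    intro d hd a
    have := congrArg (fun L : (Fin n → ℝ) →L[ℝ] ℝ => L (e' (Pi.single a 1))) hd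
    simpa [h2, Pi.single_apply] using this
  · intro a y hy
    obtain ⟨e', h1, h2⟩ := hfx y hy
    obtain ⟨h3, h4, -⟩ := hgO y hy
    rw [h2]
    have h5 := hΨN _ h3
    rw [h1, h4] at h5
    rw [← h5]
    simp
  · intro i a y hy
    obtain ⟨e', h1, h2⟩ := hfx y hy
    obtain ⟨h3, h4, -⟩ := hgO y hy
    rw [h2]
    have h5 := hΨX _ h3 i
    rw [h1, h4] at h5
    rw [← h5]
    simp [Pi.single_apply]

/-- extension by standard basis vectors -/
theorem aux_extend (n m : ℕ) (hm : m ≤ n) (v : Fin m → (Fin n → ℝ)) (hv : LinearIndependent ℝ v) :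
    ∃ π : Fin n → Fin n, LinearIndependent ℝ (fun a : Fin n =>
      if h : (a : ℕ) < m then v ⟨a, h⟩ else Pi.single (π a) 1) := by
  rcases Nat.eq_zero_or_pos n with rfl | hn
  · exact ⟨id, linearIndependent_empty_type⟩
  suffices H : ∀ l, m ≤ l → l ≤ n → ∃ π : ℕ → Fin n, LinearIndependent ℝ (fun a : Fin l =>
      if h : (a : ℕ) < m then v ⟨a, h⟩ else Pi.single (π a) (1 : ℝ)) by
    obtain ⟨π, h⟩ := H n hm le_rfl
    exact ⟨fun a => π a, h⟩
  intro l hl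
  induction l, hl using Nat.le_induction with
  | base =>
    intro _
    refine ⟨fun _ => ⟨0, hn⟩, ?_⟩
    convert hv using 2 with a
    simp
  | succ l hl ih =>
    intro hln
    obtain ⟨π, hπ⟩ := ih (by omega)
    have : ∃ j : Fin n, (Pi.single j 1 : Fin n → ℝ) ∉ Submodule.span ℝ (range fun a : Fin l =>
      if h : (a : ℕ) < m then v ⟨a, h⟩ else Pi.single (π a) (1 : ℝ)) := by
      by_contra! hc
      have h1 : Submodule.span ℝ (range fun a : Fin l =>
        if h : (a : ℕ) < m then v ⟨a, h⟩ else Pi.single (π a) (1 : ℝ)) = ⊤ := by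
        rw [eq_top_iff]
        intro u _
        rw [pi_eq_sum_univ' u]
        exact Submodule.sum_mem _ fun j _ => Submodule.smul_mem _ _ (hc j)
      have h2 := finrank_span_eq_card hπ
      rw [h1] at h2
      simp at h2
      omega
    obtain ⟨j, hj⟩ := this
    refine ⟨Function.update π l j, ?_⟩
    rw [linearIndependent_finSucc']
    have h3 : (Fin.init fun a : Fin (l + 1) =>
      if h : (a : ℕ) < m then v ⟨a, h⟩ else (Pi.single (Function.update π l j a) (1 : ℝ) : Fin n → ℝ)) =
      (fun a : Fin l =>
      if h : (a : ℕ) < m then v ⟨a, h⟩ else Pi.single (π a) (1 : ℝ)) := by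
      ext1 a
      have : (a : ℕ) ≠ l := a.2.ne
      simp [Fin.init, Function.update_of_ne this]
    rw [h3]
    refine ⟨hπ, ?_⟩
    simpa [Nat.not_lt.2 hl] using hj
/-- Homogeneous straightening of commuting vector fields (even case):
pointwise linearly independent, pairwise commuting, homogeneous vector fields
`X₁, …, X_k` can be simultaneously straightened, `Xᵢ = ∂/∂xⁱ`, in a system of
homogeneous coordinates around any point `x₀` where either `∇(x₀) = 0` or `∇(x₀)`
is not in the span of the `Xᵢ(x₀)`. -/
theorem stmt_6 (n k : ℕ) (hk : 1 ≤ k) (hkn : k ≤ n) (w : Fin n → ℝ)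
    (U : Set (Fin n → ℝ)) (hU : IsOpen U)
    (X : Fin k → (Fin n → ℝ) → (Fin n → ℝ))
    (hX : ∀ i, ContDiffOn ℝ (⊤ : ℕ∞) (X i) U)
    (hind : ∀ y ∈ U, LinearIndependent ℝ (fun i => X i y))
    (hcomm : ∀ i j, ∀ y ∈ U,
      fderiv ℝ (X j) y (X i y) - fderiv ℝ (X i) y (X j y) = 0)
    (hhom : ∀ i, ∃ c : ℝ, ∀ y ∈ U,
      fderiv ℝ (X i) y (fun j => w j * y j) - (fun j => w j * X i y j) = c • X i y)
    (x₀ : Fin n → ℝ) (hx₀ : x₀ ∈ U)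
    (hcase : (fun j => w j * x₀ j) = 0 ∨
      (fun j => w j * x₀ j) ∉ Submodule.span ℝ (Set.range fun i => X i x₀)) :
    ∃ (V : Set (Fin n → ℝ)) (lam : Fin n → ℝ) (x : Fin n → (Fin n → ℝ) → ℝ),
      IsOpen V ∧ x₀ ∈ V ∧ V ⊆ U ∧
      (∀ a, ContDiffOn ℝ (⊤ : ℕ∞) (x a) V) ∧
      (∀ y ∈ V, LinearIndependent ℝ (fun a => fderiv ℝ (x a) y)) ∧
      (∀ a, ∀ y ∈ V, fderiv ℝ (x a) y (fun j => w j * y j) = lam a * x a y) ∧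
      (∀ (i : Fin k) (a : Fin n), ∀ y ∈ V,
        fderiv ℝ (x a) y (X i y) = if a = Fin.castLE hkn i then 1 else 0) := by
  choose c hc using hhom
  rcases hcase with h0 | hns
  · obtain ⟨π, hπ⟩ := aux_extend n k hkn _ (hind x₀ hx₀)
    let L : (Fin n → ℝ) →L[ℝ] (Fin n → ℝ) := ∑ a : Fin n, (ContinuousLinearMap.proj a).smulRight
      (if (a : ℕ) < k then 0 else Pi.single (π a) (1 : ℝ))
    have hL : ∀ u, L u = ∑ a : Fin n, u a • (if (a : ℕ) < k then 0 else Pi.single (π a) (1 : ℝ)) :=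
      fun u => by simp [L]
    have hLs : ∀ a : Fin n, L (Pi.single a 1) =
        if (a : ℕ) < k then 0 else Pi.single (π a) (1 : ℝ) := by
      intro a
      rw [hL, Finset.sum_eq_single a]
      · simp
      · intro b _ hb
        simp [hb]
      · simp
    have hσd : ∀ u, HasFDerivAt (fun u => x₀ + L u) L u := fun u => L.hasFDerivAt.const_add x₀
    refine aux_straight n k hkn w U hU X hX hcomm c hc x₀ hx₀ (fun u => x₀ + L u) univ isOpen_univ
      0 (mem_univ _) (contDiff_const.add L.contDiff).contDiffOn (by simp) (fun _ => rfl)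
      (fun a => if h : (a : ℕ) < k then - c ⟨a, h⟩ else w (π a)) (by intro i; simp) ?_ ?_ ?_
    · intro u _ i
      rw [(hσd u).fderiv, hLs]
      simp
    · intro u _
      rw [(hσd u).fderiv]
      ext j
      have h1 : w j * x₀ j = 0 := congrFun h0 j
      simp only [Pi.add_apply, mul_add, h1, zero_add, hL, Finset.sum_apply, Finset.mul_sum]
      refine Finset.sum_congr rfl fun a _ => ?_
      by_cases ha : (a : ℕ) < k
      · simp [ha]
      · by_cases hj : j = π a
        · subst hj
          simp [ha]
        · simp [ha, Pi.single_apply, hj]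
    · convert hπ using 2 with a
      split_ifs with h
      · rfl
      · rw [(hσd _).fderiv, hLs, if_neg h]
  · have hv : LinearIndependent ℝ (Fin.snoc (fun i => X i x₀) (fun j => w j * x₀ j) :
        Fin (k + 1) → (Fin n → ℝ)) :=
      linearIndependent_finSnoc.2 ⟨hind x₀ hx₀, hns⟩
    have hkn1 : k + 1 ≤ n := by
      have := hv.fintype_card_le_finrank
      simpa using this
    obtain ⟨π, hπ⟩ := aux_extend n (k + 1) hkn1 _ hv
    let K : Fin n := ⟨k, hkn1⟩
    let L : (Fin n → ℝ) →L[ℝ] (Fin n → ℝ) := ∑ a : Fin n, (ContinuousLinearMap.proj a).smulRight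
      (if (a : ℕ) < k + 1 then 0 else Pi.single (π a) (1 : ℝ))
    have hL : ∀ u, L u =
        ∑ a : Fin n, u a • (if (a : ℕ) < k + 1 then 0 else Pi.single (π a) (1 : ℝ)) :=
      fun u => by simp [L]
    have hLs : ∀ a : Fin n, L (Pi.single a 1) =
        if (a : ℕ) < k + 1 then 0 else Pi.single (π a) (1 : ℝ) := by
      intro a
      rw [hL, Finset.sum_eq_single a]
      · simp
      · intro b _ hb
        simp [hb]
      · simp
    let σ : (Fin n → ℝ) → (Fin n → ℝ) := fun u j => (u K) ^ (w j) * (x₀ j + L u j)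
    have hS : IsOpen {u : Fin n → ℝ | 0 < u K} := isOpen_lt continuous_const (continuous_apply K)
    have hσc : ContDiffOn ℝ ∞ σ {u : Fin n → ℝ | 0 < u K} := by
      rw [contDiffOn_pi]
      intro j
      refine ContDiffOn.mul ?_ ?_
      · exact (contDiff_apply ℝ ℝ K).contDiffOn.rpow_const_of_ne (fun u hu => ne_of_gt hu)
      · exact (contDiff_const.add ((contDiff_apply ℝ ℝ j).comp L.contDiff)).contDiffOn
    have hσd : ∀ u : Fin n → ℝ, 0 < u K → ∀ v, fderiv ℝ σ u v = fun j =>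
        w j * (u K) ^ (w j - 1) * v K * (x₀ j + L u j) + (u K) ^ (w j) * L v j := by
      intro u hu v
      ext j
      have hd : DifferentiableAt ℝ σ u :=
        (hσc.contDiffAt (hS.mem_nhds hu)).differentiableAt (by simp)
      have h1 := hasFDerivAt_pi'.1 hd.hasFDerivAt j
      have h2 : HasFDerivAt (fun u : Fin n → ℝ => u K) (ContinuousLinearMap.proj K) u :=
        (ContinuousLinearMap.proj (R := ℝ) (φ := fun _ : Fin n => ℝ) K).hasFDerivAt
      have h3 := h2.rpow_const (p := w j) (Or.inl hu.ne')
      have h4 := (((ContinuousLinearMap.proj (R := ℝ) (φ := fun _ : Fin n => ℝ) j).comp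
        L).hasFDerivAt (x := u)).const_add (x₀ j)
      have h5 := congrArg (fun M : (Fin n → ℝ) →L[ℝ] ℝ => M v) (h1.unique (h3.mul h4))
      simp only [ContinuousLinearMap.comp_apply, ContinuousLinearMap.proj_apply,
        add_apply, smul_apply, smul_eq_mul] at h5
      rw [h5]; ring
    have hu0 : (Pi.single K 1 : Fin n → ℝ) K = 1 := by simp
    have hL0 : L (Pi.single K 1) = 0 := by rw [hLs]; simp [K]
    refine aux_straight n k hkn w U hU X hX hcomm c hc x₀ hx₀ σ {u | 0 < u K} hS
      (Pi.single K 1) (by simp) hσc ?_ ?_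
      (fun a => if h : (a : ℕ) < k then - c ⟨a, h⟩ else if (a : ℕ) = k then 1 else 0)
      (by intro i; simp) ?_ ?_ ?_
    · ext j
      simp [σ, hL0]
    · intro i
      have : Fin.castLE hkn i ≠ K := by
        simp only [K, ne_eq, Fin.ext_iff, Fin.val_castLE]; exact i.2.ne
      simp [this]
    · intro u hu i
      have h1 : K ≠ Fin.castLE hkn i := by
        simp only [K, ne_eq, Fin.ext_iff, Fin.val_castLE]; exact i.2.ne'
      have h2 : (i : ℕ) < k + 1 := i.2.trans (Nat.lt_succ_self k)
      rw [hσd u hu, hLs]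
      ext j
      simp [h1, h2]
    · intro u hu
      rw [hσd u hu]
      have h1 : L (fun a => (if h : (a : ℕ) < k then - c ⟨a, h⟩ else
          if (a : ℕ) = k then 1 else 0) * u a) = 0 := by
        rw [hL]
        refine Finset.sum_eq_zero fun a _ => ?_
        by_cases ha : (a : ℕ) < k + 1
        · simp [ha]
        · have h2 : ¬ (a : ℕ) < k := by omega
          have h3 : ¬ (a : ℕ) = k := by omega
          simp [h2, h3]
      ext j
      rw [h1]
      have h4 : (u K) ^ (w j - 1) * u K = (u K) ^ (w j) := by
        rw [Real.rpow_sub_one (ne_of_gt hu)]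
        exact div_mul_cancel₀ _ (ne_of_gt hu)
      simp only [K, lt_irrefl, dite_false, if_true, one_mul, Pi.zero_apply, mul_zero, add_zero, σ]
      rw [mul_assoc (w j), h4, mul_assoc]
    · convert hπ using 2 with a
      rcases lt_trichotomy (a : ℕ) k with h | h | h
      · have h' : (a : ℕ) < k + 1 := by omega
        rw [dif_pos h, dif_pos h']
        simp [Fin.snoc, h]
      · have h' : (a : ℕ) < k + 1 := by omega
        have h'' : ¬ (a : ℕ) < k := by omega
        have haK : a = K := Fin.ext h
        subst haK
        rw [dif_neg h'', dif_pos h', hσd _ (by simp), hL0]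
        ext j
        simp [Fin.snoc, K]
      · have h' : ¬ (a : ℕ) < k + 1 := by omega
        have h'' : ¬ (a : ℕ) < k := by omega
        have haK : K ≠ a := fun hh => by rw [← hh] at h; exact lt_irrefl _ h
        rw [dif_neg h'', dif_neg h', hσd _ (by simp), hLs a, if_neg h']
        ext j
        simp [haK]
end

section
/- Homogeneous Frobenius theorem (even case, at a zero of ∇): let ∇(x) = (w₁x₁,…,wₙxₙ) on ℝⁿ, let U ⊆ ℝⁿ be open, and let V₁,…,V_k be smooth vector fields on U, linearly independent at every point, each homogeneous with respect to ∇ (i.e., [∇, Vᵢ] = cᵢ·Vᵢ with cᵢ ∈ ℝ), and spanning an involutive distribution: [Vᵢ, Vⱼ](y) ∈ span{V₁(y),…,V_k(y)} for all y ∈ U and all i,j. Let x₀ ∈ U with ∇(x₀) = 0. Then there exist an open neighbourhood V of x₀, reals λ₁,…,λₙ, and smooth functions x¹,…,xⁿ on V with everywhere linearly independent differentials, each homogeneous (Σⱼ wⱼ yⱼ ∂ⱼxᵃ = λₐ·xᵃ on V), such that Dxʲ(y)(Vᵢ(y)) = 0 for all y ∈ V, 1 ≤ i ≤ k and k < j ≤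 n, and the k×k matrix (Dxʲ(y)(Vᵢ(y)))_{1≤i,j≤k} is invertible for every y ∈ V; that is, in the homogeneous coordinates (xᵃ) the distribution spanned by V₁,…,V_k equals the span of ∂/∂x¹,…,∂/∂x^k. -/
open Set Filter Topology

set_option linter.unusedSectionVars false

section Nem
variable {E F : Type} [NormedAddCommGroup E] [NormedSpace ℝ E]
  [NormedAddCommGroup F] [NormedSpace ℝ F]

/-- Pointwise application of a curve of operators to a curve of vectors. -/
noncomputable def hfMul (E F : Type) [NormedAddCommGroup E] [NormedSpace ℝ E]
    [NormedAddCommGroup F] [NormedSpace ℝ F] :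
    C(unitInterval, E →L[ℝ] F) →L[ℝ] C(unitInterval, E) →L[ℝ] C(unitInterval, F) :=
  LinearMap.mkContinuous₂
    (LinearMap.mk₂ ℝ (fun (a : C(unitInterval, E →L[ℝ] F)) (b : C(unitInterval, E)) =>
      (⟨fun s => a s (b s), by fun_prop⟩ : C(unitInterval, F)))
      (by intros; ext; simp) (by intros; ext; simp) (by intros; ext; simp) (by intros; ext; simp))
    1 (by
      intro a b
      rw [one_mul]
      refine (ContinuousMap.norm_le _ (by positivity)).2 fun s => ?_
      exact (a s).le_of_opNorm_le_of_le (a.norm_coe_le_norm s) (b.norm_coe_le_norm s))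

@[simp] lemma hfMul_apply (a : C(unitInterval, E →L[ℝ] F)) (b : C(unitInterval, E))
    (s : unitInterval) : hfMul E F a b s = a s (b s) := rfl

lemma hfMul_bdd (E F : Type) [NormedAddCommGroup E] [NormedSpace ℝ E]
    [NormedAddCommGroup F] [NormedSpace ℝ F] :
    IsBoundedLinearMap ℝ (fun a => hfMul E F a) where
  map_add := fun a b => map_add _ a b
  map_smul := fun a b => map_smul _ a b
  bound := ⟨1, one_pos, fun a => by
    refine ContinuousLinearMap.opNorm_le_bound _ (by positivity) fun b => ?_
    rw [one_mul]
    refine (ContinuousMap.norm_le _ (by positivity)).2 fun s => ?_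
    exact (a s).le_of_opNorm_le_of_le (a.norm_coe_le_norm s) (b.norm_coe_le_norm s)⟩

lemma hfMul_contDiff (E F : Type) [NormedAddCommGroup E] [NormedSpace ℝ E]
    [NormedAddCommGroup F] [NormedSpace ℝ F] {m : WithTop ℕ∞} :
    ContDiff ℝ m (fun a => hfMul E F a) :=
  (hfMul_bdd E F).contDiff

/-- The superposition operator. -/
def hfNem (f : E → F) (hf : Continuous f) (u : C(unitInterval, E)) : C(unitInterval, F) :=
  ⟨fun s => f (u s), by fun_prop⟩

@[simp] lemma hfNem_apply (f : E → F) (hf : Continuous f) (u : C(unitInterval, E))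
    (s : unitInterval) : hfNem f hf u s = f (u s) := rfl

lemma hfNem_continuous (f : E → F) (hf : Continuous f) : Continuous (hfNem f hf) :=
  ContinuousMap.continuous_postcomp ⟨f, hf⟩

lemma hfNem_hasFDerivAt (f : E → F) (hf : Continuous f) (f' : E → E →L[ℝ] F)
    (hf' : Continuous f') (h : ∀ x, HasFDerivAt f (f' x) x) (u : C(unitInterval, E)) :
    HasFDerivAt (hfNem f hf) (hfMul E F (hfNem f' hf' u)) u := by
  rw [hasFDerivAt_iff_isLittleO_nhds_zero, Asymptotics.isLittleO_iff]
  intro c hc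
  have hcont := (hfNem_continuous f' hf').continuousAt (x := u)
  obtain ⟨δ, hδ, H⟩ := Metric.continuousAt_iff.1 hcont c hc
  filter_upwards [Metric.ball_mem_nhds (0 : C(unitInterval, E)) hδ] with g hg
  refine (ContinuousMap.norm_le _ (by positivity)).2 fun s => ?_
  have hb : ∀ z ∈ Metric.ball (u s) δ, ‖f' z - f' (u s)‖ ≤ c := by
    intro z hz
    have h1 : dist (u + ContinuousMap.const _ (z - u s)) u < δ := by
      rw [dist_eq_norm, add_sub_cancel_left]
      refine lt_of_le_of_lt ((ContinuousMap.norm_le _ (norm_nonneg (z - u s))).2 fun t => le_rfl) ?_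
      simpa [dist_eq_norm] using hz
    have h2 := (H h1).le
    rw [dist_eq_norm] at h2
    have h3 := (ContinuousMap.norm_coe_le_norm _ s).trans h2
    simpa using h3
  have hgs : ‖g s‖ ≤ ‖g‖ := g.norm_coe_le_norm s
  have hg' : ‖g‖ < δ := by simpa using hg
  have := (convex_ball (u s) δ).norm_image_sub_le_of_norm_hasFDerivWithin_le' (f := f)
    (f' := f') (φ := f' (u s)) (x := u s) (y := u s + g s)
    (fun z _ => (h z).hasFDerivWithinAt) hb (Metric.mem_ball_self hδ)
    (by simpa [dist_eq_norm] using hgs.trans_lt hg')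
  simp only [add_sub_cancel_left] at this
  calc _ = ‖f (u s + g s) - f (u s) - f' (u s) (g s)‖ := by simp
    _ ≤ c * ‖g s‖ := this
    _ ≤ _ := by gcongr

lemma hfNem_contDiff_nat (m : ℕ) : ∀ {F : Type} [NormedAddCommGroup F] [NormedSpace ℝ F]
    (f : E → F) (hf : Continuous f), ContDiff ℝ m f → ContDiff ℝ m (hfNem f hf) := by
  induction m with
  | zero =>
    intro F _ _ f hf h
    exact contDiff_zero.2 (hfNem_continuous f hf)
  | succ m ih =>
    intro F _ _ f hf h
    push_cast at h ⊢
    obtain ⟨f', h1, h2⟩ := contDiff_succ_iff_hasFDerivAt.1 h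
    refine contDiff_succ_iff_hasFDerivAt.2 ⟨fun u => hfMul E F (hfNem f' h1.continuous u), ?_, ?_⟩
    · exact (hfMul_contDiff E F).comp (ih f' h1.continuous h1)
    · exact hfNem_hasFDerivAt f hf f' h1.continuous h2

lemma hfNem_contDiff (f : E → F) (hf : Continuous f) (h : ContDiff ℝ (⊤ : ℕ∞) f) :
    ContDiff ℝ (⊤ : ℕ∞) (hfNem f hf) :=
  contDiff_infty.2 fun m => hfNem_contDiff_nat m f hf (contDiff_infty.1 h m)

variable [CompleteSpace E]

/-- Volterra integration. -/
noncomputable def hfInt (E : Type) [NormedAddCommGroup E] [NormedSpace ℝ E] [CompleteSpace E] :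
    C(unitInterval, E) →L[ℝ] C(unitInterval, E) :=
  LinearMap.mkContinuous
    { toFun := fun g => ⟨fun s => ∫ t in (0:ℝ)..s, g (projIcc 0 1 zero_le_one t), by
        have h : Continuous fun t : ℝ => g (projIcc 0 1 zero_le_one t) :=
          g.continuous.comp continuous_projIcc
        have := intervalIntegral.continuous_primitive (μ := MeasureTheory.volume) (fun a b => h.intervalIntegrable a b) 0
        exact this.comp continuous_subtype_val⟩
      map_add' := by
        intro a b
        ext s
        have h : ∀ g : C(unitInterval, E), Continuous fun t : ℝ => g (projIcc 0 1 zero_le_one t) :=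
          fun g => g.continuous.comp continuous_projIcc
        simpa using intervalIntegral.integral_add ((h a).intervalIntegrable 0 s)
          ((h b).intervalIntegrable 0 s)
      map_smul' := by
        intro c a
        ext s
        simp }
    1 (by
      intro g
      rw [one_mul]
      refine (ContinuousMap.norm_le _ (by positivity)).2 fun s => ?_
      have := intervalIntegral.norm_integral_le_of_norm_le_const (a := 0) (b := (s:ℝ)) (C := ‖g‖)
        (f := fun t => g (projIcc 0 1 zero_le_one t)) (fun t _ => g.norm_coe_le_norm _)
      refine this.trans ?_
      rw [sub_zero, abs_of_nonneg s.2.1]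
      exact mul_le_of_le_one_right (norm_nonneg _) s.2.2)

lemma hfInt_apply (g : C(unitInterval, E)) (s : unitInterval) :
    hfInt E g s = ∫ t in (0:ℝ)..s, g (projIcc 0 1 zero_le_one t) := rfl

lemma hfInt_eq (g : C(unitInterval, E)) (c : ℝ → E)
    (hc : ∀ s : unitInterval, HasDerivAt c (g s) s) (s : unitInterval) :
    hfInt E g s = c s - c 0 := by
  rw [hfInt_apply]
  refine intervalIntegral.integral_eq_sub_of_hasDerivAt (fun x hx => ?_)
    ((g.continuous.comp continuous_projIcc).intervalIntegrable 0 s)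
  rw [uIcc_of_le s.2.1] at hx
  have hx' : x ∈ Icc (0:ℝ) 1 := ⟨hx.1, hx.2.trans s.2.2⟩
  rw [projIcc_of_mem _ hx']
  exact hc ⟨x, hx'⟩

lemma hfInt_ext (a : E) (g : C(unitInterval, E)) :
    ∃ c : ℝ → E, ∀ s : unitInterval, c s = a + hfInt E g s ∧ HasDerivAt c (g s) s := by
  have h : Continuous fun t : ℝ => g (projIcc 0 1 zero_le_one t) :=
          g.continuous.comp continuous_projIcc
  refine ⟨fun s => a + ∫ t in (0:ℝ)..s, g (projIcc 0 1 zero_le_one t), fun s => ⟨rfl, ?_⟩⟩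
  have := (intervalIntegral.integral_hasDerivAt_right (h.intervalIntegrable 0 (s:ℝ))
    h.stronglyMeasurable.stronglyMeasurableAtFilter h.continuousAt).const_add a
  simpa using this
end Nem
lemma hf_implicit {E C : Type} [NormedAddCommGroup E] [NormedSpace ℝ E] [CompleteSpace E]
    [NormedAddCommGroup C] [NormedSpace ℝ C] [CompleteSpace C] (F : E × C → C)
    (hF : ContDiff ℝ (⊤ : ℕ∞) F) (x₀ : E) (c₀ : C) (h0 : F (x₀, c₀) = 0)
    (hinj : ∀ v : E, ∀ δ : C, fderiv ℝ F (x₀, c₀) (v, δ) = δ + fderiv ℝ F (x₀, c₀) (v, 0)) :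
    ∃ (W : Set E) (Γ : E → C), IsOpen W ∧ x₀ ∈ W ∧ ContDiffOn ℝ (⊤ : ℕ∞) Γ W ∧ Γ x₀ = c₀ ∧
      (∀ y ∈ W, F (y, Γ y) = 0) ∧
      ∀ y ∈ W, ∀ v δ, fderiv ℝ F (y, Γ y) (v, δ) = 0 → fderiv ℝ Γ y v = δ := by
  let H : E × C → E × C := fun z => (z.1, F z)
  have hH : ContDiff ℝ (⊤ : ℕ∞) H := contDiff_fst.prodMk hF
  have hFd : Differentiable ℝ F := hF.differentiable (by simp)
  have hH' : ∀ z, HasFDerivAt H ((ContinuousLinearMap.fst ℝ E C).prod (fderiv ℝ F z)) z :=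
    fun z => hasFDerivAt_fst.prodMk (hFd z).hasFDerivAt
  let e : (E × C) ≃L[ℝ] (E × C) :=
    (ContinuousLinearEquiv.refl ℝ E).skewProd (ContinuousLinearEquiv.refl ℝ C)
      ((fderiv ℝ F (x₀, c₀)).comp (ContinuousLinearMap.inl ℝ E C))
  have he : HasFDerivAt H (e : (E × C) →L[ℝ] (E × C)) (x₀, c₀) := by
    convert hH' (x₀, c₀) using 1
    refine ContinuousLinearMap.ext fun z => Prod.ext rfl ?_
    exact (hinj z.1 z.2).symm
  let Φ := hH.contDiffAt.toOpenPartialHomeomorph H he (by simp)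
  have hΦ : ∀ z, Φ z = H z := fun z => rfl
  have hsrc : (x₀, c₀) ∈ Φ.source := ContDiffAt.mem_toOpenPartialHomeomorph_source _ he _
  have hH0 : H (x₀, c₀) = (x₀, 0) := by simp [H, h0]
  have htgt : (x₀, (0 : C)) ∈ Φ.target := by
    rw [← hH0]; exact ContDiffAt.image_mem_toOpenPartialHomeomorph_target _ he _
  have hs0 : Φ.symm (x₀, 0) = (x₀, c₀) := by
    rw [← hH0, ← hΦ]; exact Φ.left_inv hsrc
  let S : Set (E × C) := {z | ∃ e' : (E × C) ≃L[ℝ] (E × C), (e' : (E × C) →L[ℝ] (E × C)) = fderiv ℝ H z}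
  have hS : IsOpen S := by
    have : IsOpen (Set.range ((↑) : ((E × C) ≃L[ℝ] (E × C)) → (E × C) →L[ℝ] (E × C))) :=
      ContinuousLinearEquiv.isOpen
    exact this.preimage (hH.continuous_fderiv (by simp))
  let ι : E → E × C := fun y => (y, 0)
  have hι : ContDiff ℝ (⊤ : ℕ∞) ι := contDiff_id.prodMk contDiff_const
  have hopen : IsOpen (Φ.target ∩ Φ.symm ⁻¹' S) := Φ.isOpen_inter_preimage_symm hS
  let W : Set E := ι ⁻¹' (Φ.target ∩ Φ.symm ⁻¹' S)
  have hW : IsOpen W := hopen.preimage hι.continuous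
  have hsm : ∀ y ∈ W, ContDiffAt ℝ (⊤ : ℕ∞) (fun y => (Φ.symm (ι y)).2) y := by
    rintro y ⟨hy1, e', he'⟩
    have : ContDiffAt ℝ (⊤ : ℕ∞) Φ.symm (ι y) := by
      refine Φ.contDiffAt_symm (f₀' := e') hy1 ?_ hH.contDiffAt
      rw [he']
      exact (hH.differentiable (by simp) _).hasFDerivAt
    exact contDiffAt_snd.comp y (this.comp y hι.contDiffAt)
  have hfst : ∀ y ∈ W, Φ.symm (ι y) = (y, (Φ.symm (ι y)).2) := by
    intro y hy
    have := Φ.right_inv hy.1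
    rw [hΦ] at this
    have h1 : (Φ.symm (ι y)).1 = y := congrArg Prod.fst this
    exact Prod.ext h1 rfl
  have hzero : ∀ y ∈ W, F (y, (Φ.symm (ι y)).2) = 0 := by
    intro y hy
    rw [← hfst y hy]
    have := Φ.right_inv hy.1
    rw [hΦ] at this
    exact congrArg Prod.snd this
  refine ⟨W, fun y => (Φ.symm (ι y)).2, hW, ⟨htgt, ?_⟩, ?_, ?_, hzero, ?_⟩
  · change Φ.symm (x₀, 0) ∈ S
    rw [hs0]
    exact ⟨e, he.fderiv.symm⟩
  · intro y hy
    exact (hsm y hy).contDiffWithinAt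
  · change (Φ.symm (x₀, 0)).2 = c₀
    rw [hs0]
  · intro y hy v δ hδ
    set Γ : E → C := fun y => (Φ.symm (ι y)).2 with hΓ
    have hΓd : HasFDerivAt Γ (fderiv ℝ Γ y) y := ((hsm y hy).differentiableAt (by simp)).hasFDerivAt
    have h1 : HasFDerivAt (fun y => F (y, Γ y))
        ((fderiv ℝ F (y, Γ y)).comp ((ContinuousLinearMap.id ℝ E).prod (fderiv ℝ Γ y))) y :=
      HasFDerivAt.comp y (hFd _).hasFDerivAt ((hasFDerivAt_id y).prodMk hΓd)
    have h2 : (fun y => F (y, Γ y)) =ᶠ[𝓝 y] fun _ => 0 := by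
      filter_upwards [hW.mem_nhds hy] with y' hy' using hzero y' hy'
    have h3 := (h1.congr_of_eventuallyEq h2.symm).unique (hasFDerivAt_const (0 : C) y)
    have h4 : fderiv ℝ F (y, Γ y) (v, fderiv ℝ Γ y v) = 0 := by
      simpa using congrArg (fun L => L v) h3
    obtain ⟨e', he'⟩ := hy.2
    change (e' : (E × C) →L[ℝ] (E × C)) = fderiv ℝ H (Φ.symm (ι y)) at he'
    rw [hfst y hy, (hH' _).fderiv] at he'
    have h5 : e' (v, fderiv ℝ Γ y v) = e' (v, δ) := by
      have := fun z => congrArg (fun L : (E × C) →L[ℝ] (E × C) => L z) he'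
      simp only [ContinuousLinearEquiv.coe_coe, ContinuousLinearMap.prod_apply] at this
      rw [this, this]
      ext
      · rfl
      · exact h4.trans hδ.symm
    exact congrArg Prod.snd (e'.injective h5)
section Core
variable {E : Type} [NormedAddCommGroup E] [NormedSpace ℝ E] [CompleteSpace E]

/-- The functional whose zeros are the solutions of the parametrised ODE. -/
noncomputable def hfF (X : E → E →L[ℝ] E) (hX : Continuous X) (x₀ : E) :
    E × C(unitInterval, E) → C(unitInterval, E) :=
  fun z => z.2 - ContinuousLinearMap.const ℝ unitInterval z.1 +
    hfInt E (hfMul E E (hfNem X hX z.2) (ContinuousLinearMap.const ℝ unitInterval (z.1 - x₀)))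

lemma hf_const_bdd : IsBoundedLinearMap ℝ
    (fun v : E => (ContinuousLinearMap.const ℝ unitInterval v : C(unitInterval, E))) where
  map_add := fun a b => map_add _ a b
  map_smul := fun a b => map_smul _ a b
  bound := ⟨1, one_pos, fun a => by
    rw [one_mul]
    exact (ContinuousMap.norm_le _ (by positivity)).2 fun s => le_rfl⟩

lemma hfF_contDiff (X : E → E →L[ℝ] E) (hX : ContDiff ℝ (⊤ : ℕ∞) X) (x₀ : E) :
    ContDiff ℝ (⊤ : ℕ∞) (hfF X hX.continuous x₀) := by
  unfold hfF
  have hc := (hf_const_bdd (E := E)).contDiff (n := (⊤ : ℕ∞))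
  refine (contDiff_snd.sub (hc.comp contDiff_fst)).add ?_
  refine (hfInt E).contDiff.comp ?_
  refine ContDiff.clm_apply ?_ ?_
  · exact (hfMul_contDiff E E).comp ((hfNem_contDiff X hX.continuous hX).comp contDiff_snd)
  · exact hc.comp (contDiff_fst.sub contDiff_const)

set_option maxHeartbeats 1000000 in
lemma hfF_fderiv (X : E → E →L[ℝ] E) (hX : ContDiff ℝ (⊤ : ℕ∞) X) (x₀ : E)
    (y : E) (γ : C(unitInterval, E)) (v : E) (δ : C(unitInterval, E))
    (g : C(unitInterval, E))
    (hg : ∀ s, g s = fderiv ℝ X (γ s) (δ s) (y - x₀) + X (γ s) v) :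
    fderiv ℝ (hfF X hX.continuous x₀) (y, γ) (v, δ) =
      δ - ContinuousLinearMap.const ℝ unitInterval v + hfInt E g := by
  have hX'c : Continuous (fderiv ℝ X) := hX.continuous_fderiv (by simp)
  have hN := hfNem_hasFDerivAt X hX.continuous (fderiv ℝ X) hX'c
    (fun x => (hX.differentiable (by simp) x).hasFDerivAt) γ
  have h0 : HasFDerivAt (fun z : E × C(unitInterval, E) => hfNem X hX.continuous z.2)
        ((hfMul E (E →L[ℝ] E) (hfNem (fderiv ℝ X) hX'c γ)).comp
          (ContinuousLinearMap.snd ℝ E C(unitInterval, E))) (y, γ) :=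
    HasFDerivAt.comp (y, γ) (f := Prod.snd) hN hasFDerivAt_snd
  have h1 : HasFDerivAt (fun z : E × C(unitInterval, E) => hfMul E E (hfNem X hX.continuous z.2))
      ((hfMul_bdd E E).toContinuousLinearMap.comp
        ((hfMul E (E →L[ℝ] E) (hfNem (fderiv ℝ X) hX'c γ)).comp
          (ContinuousLinearMap.snd ℝ E C(unitInterval, E)))) (y, γ) :=
    HasFDerivAt.comp (y, γ) (g := fun a => hfMul E E a)
      (f := fun z : E × C(unitInterval, E) => hfNem X hX.continuous z.2)
      ((hfMul_bdd E E).hasFDerivAt) h0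
  have h2 : HasFDerivAt (fun z : E × C(unitInterval, E) =>
      (ContinuousLinearMap.const ℝ unitInterval (z.1 - x₀) : C(unitInterval, E)))
      ((hf_const_bdd (E := E)).toContinuousLinearMap.comp
          (ContinuousLinearMap.fst ℝ E C(unitInterval, E))) (y, γ) :=
    ((hf_const_bdd (E := E)).hasFDerivAt).comp (y, γ) (hasFDerivAt_fst.sub_const x₀)
  have h3 : HasFDerivAt (fun z : E × C(unitInterval, E) =>
      (ContinuousLinearMap.const ℝ unitInterval z.1 : C(unitInterval, E)))
      ((hf_const_bdd (E := E)).toContinuousLinearMap.comp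
          (ContinuousLinearMap.fst ℝ E C(unitInterval, E))) (y, γ) :=
    ((hf_const_bdd (E := E)).hasFDerivAt).comp (y, γ) hasFDerivAt_fst
  have h4 := (hfInt E).hasFDerivAt.comp (y, γ) (h1.clm_apply h2)
  have h5 := ((hasFDerivAt_snd (𝕜 := ℝ) (p := (y, γ))).sub h3).add h4
  have h6 : fderiv ℝ (hfF X hX.continuous x₀) (y, γ) = _ := h5.fderiv
  rw [h6]
  have hg' : g = hfMul E E (hfNem X hX.continuous γ) (ContinuousLinearMap.const ℝ unitInterval v) +
      hfMul E E (hfMul E (E →L[ℝ] E) (hfNem (fderiv ℝ X) hX'c γ) δ)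
        (ContinuousLinearMap.const ℝ unitInterval (y - x₀)) := by
    ext s
    rw [hg s, add_comm]
    rfl
  rw [hg']
  rfl

lemma hf_core (X : E → E →L[ℝ] E) (hX : ContDiff ℝ (⊤ : ℕ∞) X) (x₀ : E) (O : Set E)
    (hO : IsOpen O) (hx₀ : x₀ ∈ O)
    (hsym : ∀ p ∈ O, ∀ v w, fderiv ℝ X p (X p v) w = fderiv ℝ X p (X p w) v)
    (A : E →L[ℝ] E) (hA : A x₀ = 0)
    (hhom : ∀ p ∈ O, ∀ v, fderiv ℝ X p (A p) v = A (X p v) - X p (A v)) :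
    ∃ (W : Set E) (π : E → E), IsOpen W ∧ x₀ ∈ W ∧ ContDiffOn ℝ (⊤ : ℕ∞) π W ∧
      (∀ y ∈ W, ∀ v, X y v = v → fderiv ℝ π y v = 0) ∧
      (∀ y ∈ W, fderiv ℝ π y (A y) = A (π y)) ∧
      (∀ v, fderiv ℝ π x₀ v = v - X x₀ v) := by
  have hXc := hX.continuous
  have hXd : ∀ p, HasFDerivAt X (fderiv ℝ X p) p :=
    fun p => (hX.differentiable (by simp) p).hasFDerivAt
  have hX'c : Continuous (fderiv ℝ X) := hX.continuous_fderiv (by simp)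
  let κ : E → C(unitInterval, E) := fun v => ContinuousLinearMap.const ℝ unitInterval v
  have hκ : ∀ v s, κ v s = v := fun v s => rfl
  obtain ⟨W, Γ, hW, hxW, hΓ, hΓ0, hF0, hF1⟩ := hf_implicit (hfF X hXc x₀) (hfF_contDiff X hX x₀)
    x₀ (κ x₀) (by
      ext s
      have : hfMul E E (hfNem X hXc (κ x₀)) (ContinuousLinearMap.const ℝ unitInterval (x₀ - x₀))
        = 0 := by ext s; simp
      simp only [hfF, this]
      simp [κ]) (by
      intro v δ
      have hg : Continuous fun _ : unitInterval => X x₀ v := continuous_const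
      rw [hfF_fderiv X hX x₀ x₀ (κ x₀) v δ ⟨_, hg⟩ (by intro s; simp [hκ]),
        hfF_fderiv X hX x₀ x₀ (κ x₀) v 0 ⟨_, hg⟩ (by intro s; simp [hκ])]
      abel)
  have hMT : IsOpen {u : C(unitInterval, E) | MapsTo u univ O} :=
    ContinuousMap.isOpen_setOfPred_mapsTo isCompact_univ hO
  have hW' := hΓ.continuousOn.isOpen_inter_preimage hW hMT
  have hev : ∀ y ∈ W, ∀ v, fderiv ℝ (fun y => Γ y 1) y v = fderiv ℝ Γ y v 1 := by
    intro y hy v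
    have h1 : HasFDerivAt Γ (fderiv ℝ Γ y) y :=
      ((hΓ.contDiffAt (hW.mem_nhds hy)).differentiableAt (by simp)).hasFDerivAt
    have h2 := (ContinuousMap.evalCLM ℝ (1 : unitInterval)).hasFDerivAt.comp y h1
    have h3 : fderiv ℝ (fun y => Γ y 1) y = _ := h2.fderiv
    rw [h3]; rfl
  have hsol : ∀ y ∈ W, ∃ c : ℝ → E, c 0 = y ∧ ∀ s : unitInterval, c s = Γ y s ∧
      HasDerivAt c (- X (Γ y s) (y - x₀)) s := by
    intro y hy
    have h1 := hF0 y hy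
    obtain ⟨c, hc⟩ := hfInt_ext y (-(hfMul E E (hfNem X hXc (Γ y)) (κ (y - x₀))))
    refine ⟨c, ?_, fun s => ⟨?_, ?_⟩⟩
    · have := (hc 0).1
      rw [hfInt_apply] at this
      simpa using this
    · rw [(hc s).1, map_neg]
      have := congrArg (fun u : C(unitInterval, E) => u s) h1
      simp only [hfF] at this
      change Γ y s - y + _ = 0 at this
      change y + - _ = Γ y s
      rw [add_eq_zero_iff_eq_neg] at this
      exact (congrArg (y + ·) this).symm.trans (add_sub_cancel y (Γ y s))
    · exact (hc s).2
  refine ⟨W ∩ Γ ⁻¹' {u | MapsTo u univ O}, fun y => Γ y 1, hW', ⟨hxW, ?_⟩, ?_, ?_, ?_, ?_⟩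
  · intro s _
    rw [hΓ0]; exact hx₀
  · intro y hy
    exact ((ContinuousMap.evalCLM ℝ (1 : unitInterval)).contDiff.contDiffAt.comp_contDiffWithinAt y
      (hΓ y hy.1)).mono inter_subset_left
  · intro y hy v hv
    obtain ⟨c, hc0, hc⟩ := hsol y hy.1
    let δ : C(unitInterval, E) := ⟨fun s => (1 - (s : ℝ)) • X (Γ y s) v, by fun_prop⟩
    let g : C(unitInterval, E) :=
      ⟨fun s => fderiv ℝ X (Γ y s) (δ s) (y - x₀) + X (Γ y s) v, by fun_prop⟩
    have hd := hF1 y hy.1 v δ (by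
      rw [hfF_fderiv X hX x₀ y (Γ y) v δ g (fun s => rfl)]
      ext s
      have := hfInt_eq g (fun s => - ((1 - s) • X (c s) v)) (fun s => by
        have h1 := ((hXd (c s)).comp_hasDerivAt (s : ℝ) (hc s).2).clm_apply
          (hasDerivAt_const (s : ℝ) v)
        have h2 := ((hasDerivAt_id (s : ℝ)).const_sub 1).smul h1
        refine h2.neg.congr_deriv ?_
        have h3 := hsym _ (hy.2 (mem_univ s)) v (y - x₀)
        simp [g, δ, (hc s).1, h3, -map_sub, add_comm]) s
      simp [this, δ, hc0, hv, (hc s).1])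
    rw [hev y hy.1, hd]
    simp [δ]
  · intro y hy
    obtain ⟨c, hc0, hc⟩ := hsol y hy.1
    let δ : C(unitInterval, E) := ⟨fun s => A (Γ y s), by fun_prop⟩
    let g : C(unitInterval, E) :=
      ⟨fun s => A (X (Γ y s) (y - x₀)), by fun_prop⟩
    have hd := hF1 y hy.1 (A y) δ (by
      rw [hfF_fderiv X hX x₀ y (Γ y) (A y) δ g (fun s => by
        have := hhom _ (hy.2 (mem_univ s)) (y - x₀)
        simp only [δ, g, ContinuousMap.coe_mk]
        rw [this, map_sub A y, hA]; simp)]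
      ext s
      have := hfInt_eq g (fun s => - A (c s)) (fun s => by
        have h1 := (A.hasFDerivAt.comp_hasDerivAt (s : ℝ) (hc s).2).neg
        refine h1.congr_deriv ?_
        simp [g]) s
      simp [this, δ, hc0, (hc s).1])
    rw [hev y hy.1, hd]
    simp [δ]
  · intro v
    let δ : C(unitInterval, E) := ⟨fun s => v - (s : ℝ) • X x₀ v, by fun_prop⟩
    let g : C(unitInterval, E) := ⟨fun s => X x₀ v, by fun_prop⟩
    have hd := hF1 x₀ hxW v δ (by
      rw [hΓ0, hfF_fderiv X hX x₀ x₀ (κ x₀) v δ g (fun s => by simp [g, hκ])]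
      ext s
      have := hfInt_eq g (fun s => s • X x₀ v) (fun s => by
        simpa [g] using (hasDerivAt_id (s : ℝ)).smul_const (X x₀ v)) s
      simp [this, δ])
    rw [hev x₀ hxW, hd]
    simp [δ]
end Core
lemma hf_cutoff {E F : Type} [NormedAddCommGroup E] [NormedSpace ℝ E] [FiniteDimensional ℝ E]
    [NormedAddCommGroup F] [NormedSpace ℝ F] (X : E → F) (U : Set E) (hU : IsOpen U)
    (hX : ContDiffOn ℝ (⊤ : ℕ∞) X U) (x₀ : E) (hx : x₀ ∈ U) :
    ∃ (X' : E → F) (O : Set E), ContDiff ℝ (⊤ : ℕ∞) X' ∧ IsOpen O ∧ x₀ ∈ O ∧ O ⊆ U ∧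
      ∀ p ∈ O, X' p = X p := by
  obtain ⟨r, hr, hrU⟩ := Metric.nhds_basis_closedBall.mem_iff.1 (hU.mem_nhds hx)
  let f : ContDiffBump x₀ := ⟨r / 2, r, by positivity, by linarith⟩
  refine ⟨fun p => f p • X p, Metric.ball x₀ (r / 2), ?_, Metric.isOpen_ball,
    Metric.mem_ball_self (by positivity), ?_, ?_⟩
  · rw [contDiff_iff_contDiffAt]
    intro p
    by_cases hp : p ∈ U
    · exact f.contDiff.contDiffAt.smul (hX.contDiffAt (hU.mem_nhds hp))
    · have h1 : p ∉ tsupport f := by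
        rw [f.tsupport_eq]
        exact fun h => hp (hrU h)
      have h2 := notMem_tsupport_iff_eventuallyEq.1 h1
      refine (contDiffAt_const (c := (0 : F))).congr_of_eventuallyEq ?_
      filter_upwards [h2] with q hq
      simp [hq]
  · exact fun p hp => hrU (Metric.ball_subset_closedBall
      (Metric.ball_subset_ball (by linarith) hp))
  · intro p hp
    have : f p = 1 := f.one_of_mem_closedBall (Metric.ball_subset_closedBall hp)
    simp [this]

lemma hf_core' {E : Type} [NormedAddCommGroup E] [NormedSpace ℝ E] [FiniteDimensional ℝ E]
    (X : E → E →L[ℝ] E) (x₀ : E) (O : Set E)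
    (hO : IsOpen O) (hx₀ : x₀ ∈ O) (hX : ContDiffOn ℝ (⊤ : ℕ∞) X O)
    (hsym : ∀ p ∈ O, ∀ v w, fderiv ℝ X p (X p v) w = fderiv ℝ X p (X p w) v)
    (A : E →L[ℝ] E) (hA : A x₀ = 0)
    (hhom : ∀ p ∈ O, ∀ v, fderiv ℝ X p (A p) v = A (X p v) - X p (A v)) :
    ∃ (W : Set E) (π : E → E), IsOpen W ∧ x₀ ∈ W ∧ W ⊆ O ∧ ContDiffOn ℝ (⊤ : ℕ∞) π W ∧
      (∀ y ∈ W, ∀ v, X y v = v → fderiv ℝ π y v = 0) ∧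
      (∀ y ∈ W, fderiv ℝ π y (A y) = A (π y)) ∧
      (∀ v, fderiv ℝ π x₀ v = v - X x₀ v) := by
  have : CompleteSpace E := FiniteDimensional.complete ℝ E
  obtain ⟨X', O', hX', hO', hx', hsub, heq⟩ := hf_cutoff X O hO hX x₀ hx₀
  have hfd : ∀ p ∈ O', fderiv ℝ X' p = fderiv ℝ X p := fun p hp =>
    Filter.EventuallyEq.fderiv_eq (by filter_upwards [hO'.mem_nhds hp] with q hq using heq q hq)
  obtain ⟨W, π, h1, h2, h3, h4, h5, h6⟩ := hf_core X' hX' x₀ O' hO' hx'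
    (fun p hp v w => by rw [hfd p hp, heq p hp]; exact hsym p (hsub hp) v w) A hA
    (fun p hp v => by rw [hfd p hp, heq p hp]; exact hhom p (hsub hp) v)
  refine ⟨W ∩ O', π, h1.inter hO', ⟨h2, hx'⟩, fun y hy => hsub hy.2, h3.mono inter_subset_left,
    fun y hy v hv => h4 y hy.1 v (by rw [heq y hy.2, hv]), fun y hy => h5 y hy.1, fun v => ?_⟩
  rw [h6, heq x₀ hx']

lemma hf_basis (n k : ℕ) (hkn : k ≤ n) (A : (Fin n → ℝ) →L[ℝ] (Fin n → ℝ)) (w : Fin n → ℝ)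
    (hA : ∀ y, A y = fun j => w j * y j)
    (v : Fin k → (Fin n → ℝ)) (hv : LinearIndependent ℝ v) (c : Fin k → ℝ)
    (hc : ∀ i, A (v i) = c i • v i) :
    ∃ (b : Module.Basis (Fin n) ℝ (Fin n → ℝ)) (μ : Fin n → ℝ), (∀ a, A (b a) = μ a • b a) ∧
      ∀ i, b (Fin.castLE hkn i) = v i := by
  classical
  let t : Set (Fin n → ℝ) := {u | ∃ m : ℝ, A u = m • u}
  have hst : range v ⊆ t := by
    rintro _ ⟨i, rfl⟩
    exact ⟨c i, hc i⟩
  have ht : ⊤ ≤ Submodule.span ℝ t := by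
    rw [← (Pi.basisFun ℝ (Fin n)).span_eq]
    refine Submodule.span_mono ?_
    rintro _ ⟨j, rfl⟩
    refine ⟨w j, ?_⟩
    rw [hA]
    ext l
    by_cases h : l = j
    · subst h; simp
    · simp [h]
  have hs : LinearIndepOn ℝ id (range v) := hv.linearIndepOn_id
  let B := Module.Basis.extendLe hs hst ht
  have hBt : hs.extend hst ⊆ t := hs.extend_subset hst
  have hBv : range v ⊆ hs.extend hst := hs.subset_extend hst
  have hfin : (hs.extend hst).Finite := Module.Finite.finite_basis B
  let T : Finset (Fin n → ℝ) := hfin.toFinset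
  have hcard : Fintype.card (Fin n) = T.card := by
    have h1 := Module.finrank_eq_nat_card_basis B
    rw [Nat.card_coe_set_eq, Set.ncard_eq_toFinset_card _ hfin] at h1
    rw [← h1]; simp
  let f : Fin n → (Fin n → ℝ) := fun a => if h : (a : ℕ) < k then v ⟨a, h⟩ else 0
  have hf : ∀ i, f (Fin.castLE hkn i) = v i := by intro i; simp [f]
  obtain ⟨e, he⟩ := Finset.exists_equiv_extend_of_card_eq hcard
    (s := Finset.univ.image (Fin.castLE hkn)) (f := f) (by
      intro x hx
      simp only [Finset.mem_image, Finset.mem_univ, true_and] at hx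
      obtain ⟨_, ⟨i, rfl⟩, rfl⟩ := hx
      rw [hf]
      exact hfin.mem_toFinset.2 (hBv ⟨i, rfl⟩)) (by
      intro x hx y hy hxy
      simp only [Finset.coe_image, Finset.coe_univ, image_univ, mem_range] at hx hy
      obtain ⟨i, rfl⟩ := hx
      obtain ⟨j, rfl⟩ := hy
      rw [hf, hf] at hxy
      rw [hv.injective hxy])
  let e' : T ≃ hs.extend hst := Equiv.subtypeEquivRight fun x => hfin.mem_toFinset
  let b := B.reindex (e.trans e').symm
  have hb : ∀ a, b a = (e a : Fin n → ℝ) := by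
    intro a
    simp [b, B, e']
  have hb' : ∀ a, ∃ m : ℝ, A (b a) = m • b a := by
    intro a
    rw [hb]
    exact hBt (hfin.mem_toFinset.1 (e a).2)
  choose μ hμ using hb'
  refine ⟨b, μ, hμ, fun i => ?_⟩
  rw [hb, he _ (by simp), hf]
lemma hf_proj (n k : ℕ) (hkn : k ≤ n)
    (U : Set (Fin n → ℝ)) (hU : IsOpen U)
    (Vf : Fin k → (Fin n → ℝ) → (Fin n → ℝ))
    (hV : ∀ i, ContDiffOn ℝ (⊤ : ℕ∞) (Vf i) U)
    (A : (Fin n → ℝ) →L[ℝ] (Fin n → ℝ))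
    (hhom : ∀ i, ∃ c : ℝ, ∀ y ∈ U, fderiv ℝ (Vf i) y (A y) - A (Vf i y) = c • Vf i y)
    (hinv : ∀ i j, ∀ y ∈ U,
      fderiv ℝ (Vf j) y (Vf i y) - fderiv ℝ (Vf i) y (Vf j y)
        ∈ Submodule.span ℝ (Set.range fun l => Vf l y))
    (x₀ : Fin n → ℝ) (hx₀ : x₀ ∈ U)
    (b : Module.Basis (Fin n) ℝ (Fin n → ℝ)) (μ : Fin n → ℝ) (hb : ∀ a, A (b a) = μ a • b a)
    (hbv : ∀ i, b (Fin.castLE hkn i) = Vf i x₀) :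
    ∃ (O : Set (Fin n → ℝ)) (X : (Fin n → ℝ) → (Fin n → ℝ) →L[ℝ] (Fin n → ℝ)),
      IsOpen O ∧ x₀ ∈ O ∧ O ⊆ U ∧ ContDiffOn ℝ (⊤ : ℕ∞) X O ∧
      (∀ p ∈ O, ∀ v w, fderiv ℝ X p (X p v) w = fderiv ℝ X p (X p w) v) ∧
      (∀ p ∈ O, ∀ v, fderiv ℝ X p (A p) v = A (X p v) - X p (A v)) ∧
      (∀ p ∈ O, ∀ i, X p (Vf i p) = Vf i p) ∧
      (∀ a : Fin n, k ≤ (a : ℕ) → X x₀ (b a) = 0) := by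
  classical
  let Z : Fin n → (Fin n → ℝ) → (Fin n → ℝ) :=
    fun a p => if h : (a : ℕ) < k then Vf ⟨a, h⟩ p else b a
  have hZ1 : ∀ i, Z (Fin.castLE hkn i) = Vf i := by intro i; ext1 p; simp [Z]
  have hZ2 : ∀ a : Fin n, k ≤ (a : ℕ) → Z a = fun _ => b a := by
    intro a ha; ext1 p; simp [Z, not_lt.2 ha]
  have hcase : ∀ a : Fin n, (∃ i, a = Fin.castLE hkn i) ∨ k ≤ (a : ℕ) := by
    intro a
    rcases lt_or_ge (a : ℕ) k with h | h
    · exact Or.inl ⟨⟨a, h⟩, rfl⟩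
    · exact Or.inr h
  have hZs : ∀ a, ContDiffOn ℝ (⊤ : ℕ∞) (Z a) U := by
    intro a
    rcases hcase a with ⟨i, rfl⟩ | h
    · rw [hZ1]; exact hV i
    · rw [hZ2 a h]; exact contDiffOn_const
  have hZ0 : ∀ a, Z a x₀ = b a := by
    intro a
    rcases hcase a with ⟨i, rfl⟩ | h
    · rw [hZ1, hbv]
    · rw [hZ2 a h]
  let ell : Fin n → (Fin n → ℝ) →L[ℝ] ℝ := fun a => LinearMap.toContinuousLinearMap (b.coord a)
  let Y : (Fin n → ℝ) → (Fin n → ℝ) →L[ℝ] (Fin n → ℝ) := fun p => ∑ a, (ell a).smulRight (Z a p)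
  have hY : ∀ p a, Y p (b a) = Z a p := by
    intro p a
    simp [Y, ell, Finsupp.single_apply, ite_smul]
  have hYs : ContDiffOn ℝ (⊤ : ℕ∞) Y U := by
    refine ContDiffOn.sum fun a _ => ?_
    exact (ContinuousLinearMap.smulRightL ℝ (Fin n → ℝ) (Fin n → ℝ) (ell a)).contDiff.comp_contDiffOn
      (hZs a)
  have hY0 : Y x₀ = 1 := by
    refine ContinuousLinearMap.coe_injective (b.ext fun a => ?_)
    simpa using (hY x₀ a).trans (hZ0 a)
  let P : (Fin n → ℝ) →L[ℝ] (Fin n → ℝ) :=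
    LinearMap.toContinuousLinearMap (b.constr ℝ fun a : Fin n => if (a : ℕ) < k then b a else 0)
  have hP : ∀ a : Fin n, P (b a) = if (a : ℕ) < k then b a else 0 := by
    intro a
    exact b.constr_basis ℝ _ a
  let O : Set (Fin n → ℝ) := U ∩ Y ⁻¹' {L | IsUnit L}
  have hO : IsOpen O := hYs.continuousOn.isOpen_inter_preimage hU Units.isOpen
  let X : (Fin n → ℝ) → (Fin n → ℝ) →L[ℝ] (Fin n → ℝ) := fun p => Y p * P * Ring.inverse (Y p)
  have hxO : x₀ ∈ O := ⟨hx₀, by simp [hY0]⟩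
  have hXs : ContDiffOn ℝ (⊤ : ℕ∞) X O := by
    intro p hp
    have h1 : ContDiffAt ℝ (⊤ : ℕ∞) Y p := hYs.contDiffAt (hU.mem_nhds hp.1)
    obtain ⟨u, hu⟩ := hp.2
    have h2 : ContDiffAt ℝ (⊤ : ℕ∞) Ring.inverse (Y p) := by
      rw [← hu]; exact contDiffAt_ringInverse ℝ u
    exact ((h1.mul contDiffAt_const).mul (h2.comp p h1)).contDiffWithinAt
  have hXZ : ∀ p ∈ O, ∀ a : Fin n, X p (Z a p) = if (a : ℕ) < k then Z a p else 0 := by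
    intro p hp a
    have h1 : Ring.inverse (Y p) (Y p (b a)) = b a := by
      have := Ring.inverse_mul_cancel _ hp.2
      exact congrArg (fun L : (Fin n → ℝ) →L[ℝ] (Fin n → ℝ) => L (b a)) this
    rw [← hY]
    change Y p (P (Ring.inverse (Y p) (Y p (b a)))) = _
    rw [h1, hP]
    split_ifs <;> simp
  have hXV : ∀ p ∈ O, ∀ i, X p (Vf i p) = Vf i p := by
    intro p hp i
    have := hXZ p hp (Fin.castLE hkn i)
    rw [hZ1] at this
    simpa using this
  have hXb : ∀ p ∈ O, ∀ a : Fin n, k ≤ (a : ℕ) → X p (b a) = 0 := by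
    intro p hp a ha
    have := hXZ p hp a
    rw [hZ2 a ha] at this
    simpa [not_lt.2 ha] using this
  have hext : ∀ p ∈ O, ∀ L M : (Fin n → ℝ) →ₗ[ℝ] (Fin n → ℝ),
      (∀ a, L (Z a p) = M (Z a p)) → ∀ v, L v = M v := by
    intro p hp L M h v
    have h1 : L ∘ₗ (Y p : (Fin n → ℝ) →ₗ[ℝ] (Fin n → ℝ)) = M ∘ₗ (Y p : (Fin n → ℝ) →ₗ[ℝ] (Fin n → ℝ)) :=
      b.ext fun a => by simpa [hY] using h a
    have h2 : Y p (Ring.inverse (Y p) v) = v := by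
      have := Ring.mul_inverse_cancel _ hp.2
      exact congrArg (fun L : (Fin n → ℝ) →L[ℝ] (Fin n → ℝ) => L v) this
    have := congrArg (fun L : (Fin n → ℝ) →ₗ[ℝ] (Fin n → ℝ) => L (Ring.inverse (Y p) v)) h1
    simpa [h2] using this
  have hXd : ∀ p ∈ O, HasFDerivAt X (fderiv ℝ X p) p := fun p hp =>
    ((hXs.contDiffAt (hO.mem_nhds hp)).differentiableAt (by simp)).hasFDerivAt
  have hDb : ∀ p ∈ O, ∀ u, ∀ a : Fin n, k ≤ (a : ℕ) → fderiv ℝ X p u (b a) = 0 := by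
    intro p hp u a ha
    have h1 := (hXd p hp).clm_apply (hasFDerivAt_const (b a) p)
    have h2 : (fun q => X q (b a)) =ᶠ[𝓝 p] fun _ => 0 := by
      filter_upwards [hO.mem_nhds hp] with q hq using hXb q hq a ha
    have h3 := (h1.congr_of_eventuallyEq h2.symm).unique (hasFDerivAt_const _ p)
    simpa using congrArg (fun L => L u) h3
  have hDV : ∀ p ∈ O, ∀ u i, fderiv ℝ X p u (Vf i p) =
      fderiv ℝ (Vf i) p u - X p (fderiv ℝ (Vf i) p u) := by
    intro p hp u i
    have h0 : HasFDerivAt (Vf i) (fderiv ℝ (Vf i) p) p :=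
      (((hV i).contDiffAt (hU.mem_nhds hp.1)).differentiableAt (by simp)).hasFDerivAt
    have h1 := (hXd p hp).clm_apply h0
    have h2 : (fun q => X q (Vf i q)) =ᶠ[𝓝 p] Vf i := by
      filter_upwards [hO.mem_nhds hp] with q hq using hXV q hq i
    have h3 := (h1.congr_of_eventuallyEq h2.symm).unique h0
    have h4 : X p (fderiv ℝ (Vf i) p u) + fderiv ℝ X p u (Vf i p) = fderiv ℝ (Vf i) p u :=
      congrArg (fun L => L u) h3
    exact eq_sub_of_add_eq ((add_comm _ _).trans h4)
  have hspan : ∀ p ∈ O, ∀ q ∈ Submodule.span ℝ (Set.range fun l => Vf l p), X p q = q := by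
    intro p hp q hq
    induction hq using Submodule.span_induction with
    | mem x hx => obtain ⟨l, rfl⟩ := hx; exact hXV p hp l
    | zero => simp
    | add x y _ _ hx hy => rw [map_add, hx, hy]
    | smul c x _ hx => rw [map_smul, hx]
  refine ⟨O, X, hO, hxO, inter_subset_left, hXs, ?_, ?_, hXV, fun a ha => hXb x₀ hxO a ha⟩
  · intro p hp v w
    let D := fderiv ℝ X p
    have key : ∀ a c, D (X p (Z a p)) (Z c p) = D (X p (Z c p)) (Z a p) := by
      intro a c
      rcases hcase a with ⟨i, rfl⟩ | ha <;> rcases hcase c with ⟨j, rfl⟩ | hc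
      · simp only [hZ1, hXV p hp, D, hDV p hp]
        have := hspan p hp _ (hinv i j p hp.1)
        rw [map_sub] at this
        linear_combination (exp := 1) -this
      · simp only [hZ2 c hc, hXb p hp c hc, D, hDb p hp _ c hc]; simp
      · simp only [hZ2 a ha, hXb p hp a ha, D, hDb p hp _ a ha]; simp
      · simp only [hZ2 a ha, hXb p hp a ha, D, hDb p hp _ a ha, hZ2 c hc, hXb p hp c hc]; simp
    have k1 : ∀ a w, D (X p (Z a p)) w = D (X p w) (Z a p) := fun a =>
      hext p hp (D (X p (Z a p))) ((D.flip (Z a p)).comp (X p)) fun c => by simpa using key a c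
    exact hext p hp ((D.flip w).comp (X p)) (D (X p w)) (fun a => by simpa using k1 a w) v
  · intro p hp
    refine hext p hp (fderiv ℝ X p (A p)) (A.comp (X p) - (X p).comp A) fun a => ?_
    rcases hcase a with ⟨i, rfl⟩ | ha
    · obtain ⟨c, hc⟩ := hhom i
      have h1 : fderiv ℝ (Vf i) p (A p) = A (Vf i p) + c • Vf i p := by
        rw [← hc p hp.1]; abel
      simp [hZ1, hDV p hp, h1, hXV p hp]
    · simp [hZ2 a ha, hDb p hp _ a ha, hXb p hp a ha, hb]

/-- Homogeneous Frobenius theorem (even case, at a zero of `∇`): an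
involutive distribution spanned by pointwise linearly independent homogeneous vector
fields `V₁, …, V_k` is, around any point `x₀` with `∇(x₀) = 0`, the span of
`∂/∂x¹, …, ∂/∂x^k` in a system of homogeneous coordinates `(xᵃ)`. -/
theorem stmt_7 (n k : ℕ) (hkn : k ≤ n) (w : Fin n → ℝ)
    (U : Set (Fin n → ℝ)) (hU : IsOpen U)
    (Vf : Fin k → (Fin n → ℝ) → (Fin n → ℝ))
    (hV : ∀ i, ContDiffOn ℝ (⊤ : ℕ∞) (Vf i) U)
    (hind : ∀ y ∈ U, LinearIndependent ℝ (fun i => Vf i y))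
    (hhom : ∀ i, ∃ c : ℝ, ∀ y ∈ U,
      fderiv ℝ (Vf i) y (fun j => w j * y j) - (fun j => w j * Vf i y j) = c • Vf i y)
    (hinv : ∀ i j, ∀ y ∈ U,
      fderiv ℝ (Vf j) y (Vf i y) - fderiv ℝ (Vf i) y (Vf j y)
        ∈ Submodule.span ℝ (Set.range fun l => Vf l y))
    (x₀ : Fin n → ℝ) (hx₀ : x₀ ∈ U) (h0 : (fun j => w j * x₀ j) = 0) :
    ∃ (W : Set (Fin n → ℝ)) (lam : Fin n → ℝ) (x : Fin n → (Fin n → ℝ) → ℝ),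
      IsOpen W ∧ x₀ ∈ W ∧ W ⊆ U ∧
      (∀ a, ContDiffOn ℝ (⊤ : ℕ∞) (x a) W) ∧
      (∀ y ∈ W, LinearIndependent ℝ (fun a => fderiv ℝ (x a) y)) ∧
      (∀ a, ∀ y ∈ W, fderiv ℝ (x a) y (fun j => w j * y j) = lam a * x a y) ∧
      (∀ j : Fin n, k ≤ (j : ℕ) → ∀ i : Fin k, ∀ y ∈ W,
        fderiv ℝ (x j) y (Vf i y) = 0) ∧
      (∀ y ∈ W,
        (Matrix.of fun i j : Fin k =>
          fderiv ℝ (x (Fin.castLE hkn j)) y (Vf i y)).det ≠ 0) := by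
  classical
  let A : (Fin n → ℝ) →L[ℝ] (Fin n → ℝ) :=
    ContinuousLinearMap.pi fun j => w j • ContinuousLinearMap.proj j
  have hA : ∀ y, A y = fun j => w j * y j := fun y => rfl
  have hA0 : A x₀ = 0 := h0
  have hhom' : ∀ i, ∃ c : ℝ, ∀ y ∈ U, fderiv ℝ (Vf i) y (A y) - A (Vf i y) = c • Vf i y := hhom
  choose c hc using hhom'
  obtain ⟨b, μ, hb, hbv⟩ := hf_basis n k hkn A w hA (fun i => Vf i x₀) (hind x₀ hx₀)
    (fun i => - c i) (fun i => by
      have := hc i x₀ hx₀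
      rw [hA0, map_zero, zero_sub] at this
      rw [neg_smul, ← this, neg_neg])
  obtain ⟨O, X, hO, hxO, hOU, hXs, hsym, hXhom, hXV, hXb⟩ :=
    hf_proj n k hkn U hU Vf hV A hhom hinv x₀ hx₀ b μ hb hbv
  obtain ⟨W, π, hW, hxW, hWO, hπ, hπV, hπA, hπ0⟩ :=
    hf_core' X x₀ O hO hxO hXs hsym A hA0 hXhom
  let ell : Fin n → (Fin n → ℝ) →L[ℝ] ℝ := fun a => LinearMap.toContinuousLinearMap (b.coord a)
  have hell : ∀ a d, ell a (b d) = if d = a then 1 else 0 := by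
    intro a d
    simp [ell, Finsupp.single_apply]
  have hellA : ∀ a v, ell a (A v) = μ a * ell a v := by
    intro a
    have : ((ell a).comp A : (Fin n → ℝ) →ₗ[ℝ] ℝ) = ((μ a • ell a : (Fin n → ℝ) →L[ℝ] ℝ) :
        (Fin n → ℝ) →ₗ[ℝ] ℝ) := by
      refine b.ext fun d => ?_
      by_cases h : d = a <;> simp [hb, hell, h]
    intro v
    exact congrArg (fun L : (Fin n → ℝ) →ₗ[ℝ] ℝ => L v) this
  let x : Fin n → (Fin n → ℝ) → ℝ :=
    fun a => if (a : ℕ) < k then fun y => ell a y else fun y => ell a (π y)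
  have hx1 : ∀ a : Fin n, (a : ℕ) < k → x a = fun y => ell a y := fun a ha => if_pos ha
  have hx2 : ∀ a : Fin n, k ≤ (a : ℕ) → x a = fun y => ell a (π y) := fun a ha =>
    if_neg (not_lt.2 ha)
  have hxs : ∀ a, ContDiffOn ℝ (⊤ : ℕ∞) (x a) W := by
    intro a
    rcases lt_or_ge (a : ℕ) k with h | h
    · rw [hx1 a h]; exact (ell a).contDiff.contDiffOn
    · rw [hx2 a h]; exact (ell a).contDiff.comp_contDiffOn hπ
  have hd1 : ∀ a : Fin n, (a : ℕ) < k → ∀ y, fderiv ℝ (x a) y = ell a := by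
    intro a ha y
    rw [hx1 a ha]; exact (ell a).fderiv
  have hd2 : ∀ a : Fin n, k ≤ (a : ℕ) → ∀ y ∈ W, ∀ v, fderiv ℝ (x a) y v = ell a (fderiv ℝ π y v) := by
    intro a ha y hy v
    rw [hx2 a ha]
    have h1 : HasFDerivAt π (fderiv ℝ π y) y :=
      ((hπ.contDiffAt (hW.mem_nhds hy)).differentiableAt (by simp)).hasFDerivAt
    have h2 : fderiv ℝ (fun y => ell a (π y)) y = _ := ((ell a).hasFDerivAt.comp y h1).fderiv
    rw [h2]; rfl
  have hdc : ∀ a, ContinuousOn (fderiv ℝ (x a)) W := fun a =>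
    (hxs a).continuousOn_fderiv_of_isOpen hW (by simp)
  let N : (Fin n → ℝ) → Matrix (Fin n) (Fin n) ℝ := fun y =>
    Matrix.of fun a d => fderiv ℝ (x a) y (b d)
  let M : (Fin n → ℝ) → Matrix (Fin k) (Fin k) ℝ := fun y =>
    Matrix.of fun i j : Fin k => fderiv ℝ (x (Fin.castLE hkn j)) y (Vf i y)
  have hNc : ContinuousOn (fun y => (N y).det) W := by
    refine continuous_id.matrix_det.comp_continuousOn ?_
    refine continuousOn_pi.2 fun a => continuousOn_pi.2 fun d => ?_
    exact (hdc a).clm_apply continuousOn_const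
  have hMc : ContinuousOn (fun y => (M y).det) W := by
    refine continuous_id.matrix_det.comp_continuousOn ?_
    refine continuousOn_pi.2 fun i => continuousOn_pi.2 fun j => ?_
    exact (hdc _).clm_apply ((hV i).continuousOn.mono (hWO.trans hOU))
  have hN0 : N x₀ = 1 := by
    ext a d
    simp only [N, Matrix.of_apply, Matrix.one_apply]
    rcases lt_or_ge (a : ℕ) k with h | h
    · rw [hd1 a h, hell]; simp [eq_comm]
    · rw [hd2 a h x₀ hxW, hπ0]
      rcases lt_or_ge (d : ℕ) k with h' | h'
      · have h1 : b d = Vf ⟨d, h'⟩ x₀ := hbv ⟨d, h'⟩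
        rw [h1, hXV x₀ hxO, sub_self, map_zero, if_neg]
        rintro rfl
        exact absurd h' (not_lt.2 h)
      · rw [hXb d h', sub_zero, hell]; simp [eq_comm]
  have hM0 : M x₀ = 1 := by
    ext i j
    simp only [M, Matrix.of_apply, Matrix.one_apply]
    rw [hd1 _ (by simp), ← hbv, hell]
    simp [Fin.ext_iff]
  have hW1 : IsOpen (W ∩ (fun y => (N y).det) ⁻¹' {0}ᶜ) :=
    hNc.isOpen_inter_preimage hW isOpen_compl_singleton
  have hW2 : IsOpen (W ∩ (fun y => (M y).det) ⁻¹' {0}ᶜ) :=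
    hMc.isOpen_inter_preimage hW isOpen_compl_singleton
  refine ⟨_, μ, x, hW1.inter hW2, ⟨⟨hxW, by simp [hN0]⟩, ⟨hxW, by simp [hM0]⟩⟩,
    fun y hy => hOU (hWO hy.1.1), fun a => (hxs a).mono fun y hy => hy.1.1, ?_, ?_, ?_, ?_⟩
  · intro y hy
    have h1 : (N y).det ≠ 0 := hy.1.2
    have h2 := Matrix.linearIndependent_rows_of_det_ne_zero h1
    let φ : ((Fin n → ℝ) →L[ℝ] ℝ) →ₗ[ℝ] (Fin n → ℝ) :=
      { toFun := fun L d => L (b d)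
        map_add' := fun _ _ => rfl
        map_smul' := fun _ _ => rfl }
    exact LinearIndependent.of_comp φ h2
  · intro a y hy
    change fderiv ℝ (x a) y (A y) = _
    rcases lt_or_ge (a : ℕ) k with h | h
    · rw [hd1 a h, hellA, hx1 a h]
    · rw [hd2 a h y hy.1.1, hπA y hy.1.1, hellA, hx2 a h]
  · intro j hj i y hy
    rw [hd2 j hj y hy.1.1, hπV y hy.1.1 _ (hXV y (hWO hy.1.1) i), map_zero]
  · intro y hy
    exact hy.2.2
end

section
/- Homogeneous Poincaré lemma, weight-0 case at a non-zero of ∇: let n ≥ 1, let U = (0,∞) × ℝ^{n−1} with coordinates (x, y¹, …, y^{n−1}), and let ∇ = x∂ₓ (the diagonal weight vector field with weights (1, 0, …, 0)). Let ω be a smooth closed 1-form on U which is homogeneous of weight 0 with respect to ∇, i.e., x·∂ₓω₁ + ω₁ = 0 and x·∂ₓωᵢ = 0 for i = 2,…,n. Then there exist a constant c ∈ ℝ and a smooth function g : ℝ^{n−1} → ℝ such that ω₁(x, y) = c/x and ωᵢ(x, y) = ∂g/∂y^{i−1}(y) for i = 2,…,n; equivalently, ω = df with f(x,y) = c·log(x)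 + g(y). -/
theorem aux_const {n : ℕ} (f : (Fin (n+1) → ℝ) → ℝ) (U : Set (Fin (n+1) → ℝ)) (ho : IsOpen U)
    (hc : Convex ℝ U) (hd : DifferentiableOn ℝ f U)
    (h : ∀ y ∈ U, ∀ i, fderiv ℝ f y (Pi.single i 1) = 0) : ∃ a, ∀ x ∈ U, f x = a := by
  refine ho.exists_is_const_of_fderiv_eq_zero (𝕜 := ℝ) hc.isPreconnected hd ?_
  intro y hy
  apply ContinuousLinearMap.coe_injective
  refine LinearMap.pi_ext' fun i => ?_
  ext
  simpa using h y hy i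

theorem aux_sum {n : ℕ} (A : (Fin n → ℝ) →L[ℝ] ℝ) (x : Fin n → ℝ) :
    A x = ∑ j, x j * A (Pi.single j 1) := by
  conv_lhs => rw [pi_eq_sum_univ' x]
  simp [map_sum]


/-- Homogeneous Poincaré lemma, weight-0 case at a non-zero of `∇`: on
`U = (0,∞) × ℝᵐ` (first coordinate `x = y₀`), with `∇ = x ∂ₓ`, every smooth closed 1-form
`ω` homogeneous of weight `0` has components `ω₀ = c/x` and `ωᵢ = ∂g/∂yⁱ(y)` for a
constant `c` and a smooth function `g` of the remaining variables;
equivalently `ω = d(c·log x + g(y))`. -/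
theorem stmt_9 (m : ℕ)
    (U : Set (Fin (m + 1) → ℝ)) (hUdef : U = {y | 0 < y 0})
    (ω : (Fin (m + 1) → ℝ) → Fin (m + 1) → ℝ)
    (hω : ∀ i, ContDiffOn ℝ (⊤ : ℕ∞) (fun y => ω y i) U)
    (hclosed : ∀ y ∈ U, ∀ i j,
      fderiv ℝ (fun z => ω z i) y (Pi.single j 1)
        = fderiv ℝ (fun z => ω z j) y (Pi.single i 1))
    (hhom0 : ∀ y ∈ U,
      y 0 * fderiv ℝ (fun z => ω z 0) y (Pi.single 0 1) + ω y 0 = 0)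
    (hhomi : ∀ y ∈ U, ∀ i : Fin m,
      y 0 * fderiv ℝ (fun z => ω z i.succ) y (Pi.single 0 1) = 0) :
    ∃ (c : ℝ) (g : (Fin m → ℝ) → ℝ), ContDiff ℝ (⊤ : ℕ∞) g ∧
      ∀ y ∈ U, ω y 0 = c / y 0 ∧
        ∀ i : Fin m, ω y i.succ = fderiv ℝ g (fun j => y j.succ) (Pi.single i 1) := by
  have hopen : IsOpen U := by
    rw [hUdef]; exact isOpen_lt continuous_const (continuous_apply 0)
  have hconv : Convex ℝ U := by
    rw [hUdef]
    exact convex_halfSpace_gt (f := fun y : Fin (m+1) → ℝ => y 0) ⟨fun _ _ => rfl, fun _ _ => rfl⟩ 0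
  have hdiff : ∀ y ∈ U, ∀ i, DifferentiableAt ℝ (fun z => ω z i) y := fun y hy i =>
    ((hω i).differentiableOn (by simp)).differentiableAt (hopen.mem_nhds hy)
  have hpos : ∀ y ∈ U, 0 < y 0 := by rw [hUdef]; exact fun y hy => hy
  have hz : ∀ y ∈ U, ∀ i : Fin m, fderiv ℝ (fun z => ω z i.succ) y (Pi.single 0 1) = 0 :=
    fun y hy i => (mul_eq_zero.1 (hhomi y hy i)).resolve_left (hpos y hy).ne'
  -- the constant
  obtain ⟨c, hcc⟩ : ∃ c, ∀ y ∈ U, y 0 * ω y 0 = c := by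
    have hp : ∀ y : Fin (m+1) → ℝ, HasFDerivAt (fun z : Fin (m+1) → ℝ => z 0)
        (ContinuousLinearMap.proj (R := ℝ) (φ := fun _ : Fin (m+1) => ℝ) 0) y := fun y =>
      (ContinuousLinearMap.proj (R := ℝ) (φ := fun _ : Fin (m+1) => ℝ) 0).hasFDerivAt
    refine aux_const (fun y => y 0 * ω y 0) U hopen hconv ?_ ?_
    · intro y hy
      exact ((hp y).differentiableAt.mul (hdiff y hy 0)).differentiableWithinAt
    · intro y hy i
      rw [((hp y).fun_mul (hdiff y hy 0).hasFDerivAt).fderiv]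
      have h0 := hhom0 y hy
      refine Fin.cases ?_ (fun i => ?_) i
      · simp; linarith
      · simp [hclosed y hy 0 i.succ, hz y hy i]
  -- the section
  let L : (Fin m → ℝ) →L[ℝ] (Fin (m+1) → ℝ) :=
    ContinuousLinearMap.pi (Fin.cons 0 (fun i => ContinuousLinearMap.proj i))
  have hL0 : ∀ v, L v 0 = 0 := fun v => by simp [L]
  have hLs : ∀ v i, L v (Fin.succ i) = v i := fun v i => by simp [L]
  have hLe : ∀ j : Fin m, L (Pi.single j 1) = Pi.single j.succ 1 := by
    intro j
    ext k
    refine Fin.cases ?_ (fun k => ?_) k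
    · rw [hL0]; simp [Pi.single_apply, (Fin.succ_ne_zero j).symm]
    · rw [hLs]; simp [Pi.single_apply]
  let S : (Fin m → ℝ) → (Fin (m+1) → ℝ) := fun v => Pi.single 0 1 + L v
  have hSU : ∀ v, S v ∈ U := by
    intro v; rw [hUdef]; simp [S, hL0]
  have hS : ∀ v, HasFDerivAt S L v := fun v => L.hasFDerivAt.const_add _
  have hSc : ContDiff ℝ (⊤ : ℕ∞) S := contDiff_const.add L.contDiff
  have hωS : ∀ i, ContDiff ℝ (⊤ : ℕ∞) (fun v => ω (S v) i) := fun i =>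
    (hω i).comp_contDiff hSc hSU
  let P : Fin m → ((Fin m → ℝ) →L[ℝ] ℝ) := fun i => ContinuousLinearMap.proj i
  let α : (Fin m → ℝ) → ((Fin m → ℝ) →L[ℝ] ℝ) := fun v => ∑ i : Fin m, ω (S v) i.succ • P i
  have hα : ContDiff ℝ (⊤ : ℕ∞) α :=
    ContDiff.sum fun i _ => (hωS i.succ).smul contDiff_const
  have hαd : ∀ v, HasFDerivAt α (∑ i : Fin m,
      ((fderiv ℝ (fun z => ω z i.succ) (S v)).comp L).smulRight (P i)) v := by
    intro v
    refine HasFDerivAt.fun_sum fun i _ => ?_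
    exact (((hdiff (S v) (hSU v) i.succ).hasFDerivAt).comp v (hS v)).smul_const (P i)
  obtain ⟨g, hg⟩ := convex_univ.exists_forall_hasFDerivAt_of_fderiv_symmetric (ω := α) isOpen_univ
    (hα.differentiable (by simp)).differentiableOn (by
      intro v _ x y
      rw [(hαd v).fderiv]
      have key : ∀ x y : Fin m → ℝ, (∑ i : Fin m,
          ((fderiv ℝ (fun z => ω z i.succ) (S v)).comp L).smulRight (P i)) x y
          = ∑ i, ∑ j, x j * y i * fderiv ℝ (fun z => ω z i.succ) (S v) (Pi.single j.succ 1) := by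
        intro x y
        simp only [ContinuousLinearMap.sum_apply, ContinuousLinearMap.smulRight_apply,
          ContinuousLinearMap.smul_apply, smul_eq_mul]
        refine Finset.sum_congr rfl fun i _ => ?_
        rw [aux_sum, Finset.sum_mul]
        refine Finset.sum_congr rfl fun j _ => ?_
        simp only [ContinuousLinearMap.comp_apply, hLe, P, ContinuousLinearMap.proj_apply]
        ring
      rw [key, key, Finset.sum_comm]
      refine Finset.sum_congr rfl fun i _ => Finset.sum_congr rfl fun j _ => ?_
      rw [hclosed (S v) (hSU v) j.succ i.succ]
      ring)
  have hgf : fderiv ℝ g = α := funext fun v => (hg v (Set.mem_univ v)).fderiv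
  refine ⟨c, g, ?_, ?_⟩
  · refine contDiff_infty_iff_fderiv.2 ⟨fun v => (hg v (Set.mem_univ v)).differentiableAt, ?_⟩
    rw [hgf]; exact hα
  · intro y hy
    refine ⟨?_, fun i => ?_⟩
    · rw [eq_div_iff (hpos y hy).ne', mul_comm]; exact hcc y hy
    · rw [hgf]
      have h1 : α (fun j => y j.succ) (Pi.single i 1) = ω (S fun j => y j.succ) i.succ := by
        simp [α, P, ContinuousLinearMap.sum_apply, Pi.single_apply]
      rw [h1]
      let γ : ℝ → (Fin (m+1) → ℝ) := fun t => t • Pi.single 0 1 + L (fun j => y j.succ)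
      have hγU : ∀ t ∈ Set.Ioi (0:ℝ), γ t ∈ U := by
        intro t ht; rw [hUdef]; simpa [γ, hL0] using ht
      have hγ : ∀ t, HasDerivAt γ (Pi.single 0 1) t := by
        intro t
        have h := ((hasDerivAt_id t).smul_const
          (Pi.single 0 1 : Fin (m+1) → ℝ)).add_const (L (fun j => y j.succ))
        rw [one_smul] at h
        exact h
      have hd : ∀ t ∈ Set.Ioi (0:ℝ), HasDerivAt (fun t => ω (γ t) i.succ) 0 t := by
        intro t ht
        have := ((hdiff (γ t) (hγU t ht) i.succ).hasFDerivAt).comp_hasDerivAt t (hγ t)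
        rw [hz _ (hγU t ht)] at this
        exact this
      have hcst := isOpen_Ioi.is_const_of_deriv_eq_zero (convex_Ioi (0:ℝ)).isPreconnected
        (fun t ht => (hd t ht).differentiableAt.differentiableWithinAt)
        (fun t ht => (hd t ht).deriv) (x := y 0) (y := 1) (hpos y hy) (by simp)
      have e1 : γ (y 0) = y := by
        ext k
        refine Fin.cases ?_ (fun k => ?_) k
        · simp [γ, hL0]
        · simp [γ, hLs]
      have e2 : γ 1 = S (fun j => y j.succ) := by simp [γ, S]
      simpa only [e1, e2] using hcst
end
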